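/- arXiv:1111.6348 — 2 statements merged into one kernel-verified Lean document; each statement's English description precedes it below -/
import Mathlib

section
/- Let μ be a finite positive Borel measure on ℂ with compact infinite support. For each n ∈ ℕ let Q_n be a polynomial of degree exactly n with leading coefficient τ_n, and suppose (1) ‖Q_n‖_{L²(μ)} → 1 as n → ∞, and (2) τ_n/κ_n → 1 as n → ∞. Then Q_n(z)/p_n(z;μ) → 1 as n → ∞ for every z ∉ ch(μ), and the convergence is uniform on every compact subset of ℂ ∖ ch(μ). -/
/-!
Write `Q n = c n * p n + R n` with `c n` the quotient of the leading coefficients, so that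
`deg (R n) < n`. As `p n` is orthogonal to all polynomials of lower degree,
`‖Q n‖² = |c n|² + ‖R n‖²` in `L²(μ)`; since `‖Q n‖ → 1` and `c n → 1`, this gives `‖R n‖ → 0`.

It remains to bound `|q z| ≤ C * |p n z| * ‖q‖` for all `q` of degree `< n`, with `C` uniform for `z`
in a compact set disjoint from the convex hull (`norm_eval_le`). The polynomial
`q z * p n - p n z * q` vanishes at `z`, so it equals `(X - z) * s` with `deg s < n`. Pairing with
`s` annihilates `p n` and leaves `∫ (z - w) |s w|² dμ(w) = p n z * ⟨s, q⟩`. If the hull lies at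
distance at least `δ` from `z`, it also lies in a half-plane at distance at least `δ` from `z`, so
the left side has modulus at least `δ ‖s‖²`. Hence `δ ‖s‖ ≤ |p n z| ‖q‖`, and taking norms in
`q z * p n = p n z * q + (X - z) * s` finishes the bound. The choice `q = 1` shows
`p n z ≠ 0` for `n ≥ 1`.
-/

open MeasureTheory Filter Topology Polynomial

noncomputable section

/-- The closed support of a measure: the set of points all of whose neighborhoods
have positive measure. -/
def measSupport {α : Type*} [TopologicalSpace α] [MeasurableSpace α] (μ : Measure α) : Set α :=
  {x | ∀ U ∈ nhds x, μ U ≠ 0}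

/-- `p` is the sequence of orthonormal polynomials for `μ`, with positive real leading
coefficients `κ`. -/
def OrthonormalPolys (μ : Measure ℂ) (p : ℕ → Polynomial ℂ) (κ : ℕ → ℝ) : Prop :=
  (∀ n, (p n).degree = n) ∧ (∀ n, 0 < κ n) ∧ (∀ n, (p n).leadingCoeff = (κ n : ℂ)) ∧
  (∀ n m, ∫ z, (starRingEnd ℂ) ((p n).eval z) * (p m).eval z ∂μ
      = if n = m then 1 else 0)

/-! ### Compactness of the convex hull -/

/-- By Carathéodory's theorem the convex hull of a compact plane set is the image of
`stdSimplex × S³` under `(w, f) ↦ ∑ i, w i • f i`. -/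
lemma isCompact_convexHull_complex {S : Set ℂ} (hS : IsCompact S) :
    IsCompact (convexHull ℝ S) := by
  rcases S.eq_empty_or_nonempty with rfl | ⟨x₀, hx₀⟩
  · simp
  have hk : IsCompact (stdSimplex ℝ (Fin 3) ×ˢ (Set.univ.pi fun _ : Fin 3 => S)) :=
    (isCompact_stdSimplex ℝ (Fin 3)).prod (isCompact_univ_pi fun _ => hS)
  have hcont : Continuous fun x : (Fin 3 → ℝ) × (Fin 3 → ℂ) => ∑ i, x.1 i • x.2 i := by
    fun_prop
  convert hk.image hcont using 1
  ext x
  constructor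
  · intro hx
    obtain ⟨ι, _, f, w, hf, hind, hw, hw1, rfl⟩ := eq_pos_convex_span_of_mem_convexHull hx
    have hcard : Fintype.card ι ≤ Fintype.card (Fin 3) := by
      have h1 := hind.card_le_finrank_succ
      have h2 := Submodule.finrank_le (vectorSpan ℝ (Set.range f))
      rw [Complex.finrank_real_complex] at h2
      simp only [Fintype.card_fin]
      omega
    obtain ⟨e⟩ := Function.Embedding.nonempty_of_card_le hcard
    have hsum : ∑ i, w i = ∑ j, Function.extend e w 0 j :=
      Fintype.sum_of_injective e e.injective _ _
        (fun j hj => Function.extend_apply' _ _ _ (by simpa using hj))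
        (fun i => (e.injective.extend_apply _ _ _).symm)
    refine ⟨(Function.extend e w 0, Function.extend e f fun _ => x₀), ⟨⟨?_, ?_⟩, ?_⟩, ?_⟩
    · intro j
      by_cases hj : ∃ i, e i = j
      · obtain ⟨i, rfl⟩ := hj
        simpa [e.injective.extend_apply] using (hw i).le
      · simp [Function.extend_apply' _ _ _ hj]
    · exact hsum.symm.trans hw1
    · intro j _
      by_cases hj : ∃ i, e i = j
      · obtain ⟨i, rfl⟩ := hj
        simpa [e.injective.extend_apply] using hf (Set.mem_range_self i)
      · simpa [Function.extend_apply' _ _ _ hj] using hx₀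
    · symm
      refine Fintype.sum_of_injective e e.injective _ _ (fun j hj => ?_) (fun i => ?_)
      · have : ¬ ∃ i, e i = j := by simpa using hj
        simp [Function.extend_apply' _ _ _ this]
      · simp [e.injective.extend_apply]
  · rintro ⟨⟨w, f⟩, ⟨⟨hw, hw1⟩, hf⟩, rfl⟩
    exact (convex_convexHull ℝ S).sum_mem (fun i _ => hw i) hw1
      (fun i _ => subset_convexHull ℝ S (hf i trivial))

/-- If every point of a compact convex set is at distance at least `δ` from `z`, the set lies in a
half-plane at distance at least `δ` from `z` (when `δ > 0`; otherwise `e = 0` is allowed). The normal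
`e` points from the nearest point to `z`. -/
lemma exists_halfPlane {H : Set ℂ} (hH : IsCompact H) (hconv : Convex ℝ H) (hne : H.Nonempty)
    {z : ℂ} {δ : ℝ} (hd : ∀ w ∈ H, δ ≤ ‖z - w‖) :
    ∃ e : ℂ, δ ≤ ‖e‖ ∧ ∀ w ∈ H, ‖e‖ ^ 2 ≤ ((starRingEnd ℂ) e * (z - w)).re := by
  obtain ⟨v, hv, hmin⟩ := exists_norm_eq_iInf_of_complete_convex hne hH.isComplete hconv z
  refine ⟨z - v, hd v hv, fun w hw => ?_⟩
  have h := (norm_eq_iInf_iff_real_inner_le_zero hconv hv).1 hmin w hw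
  rw [← real_inner_self_eq_norm_sq]
  have h2 : inner ℝ (z - v) (z - v) - inner ℝ (z - v) (w - v)
      = ((starRingEnd ℂ) (z - v) * (z - w)).re := by
    rw [← inner_sub_right, Complex.inner]
    ring_nf
  linarith

/-! ### Polynomials in `L²(μ)` -/

lemma measSupport_mem_ae (μ : Measure ℂ) : ∀ᵐ w ∂μ, w ∈ measSupport μ := by
  have : measSupport μ = μ.support := by
    ext x
    simp [measSupport, Measure.mem_support_iff_forall, pos_iff_ne_zero]
  rw [this]
  exact Measure.support_mem_ae

lemma memLp_eval (μ : Measure ℂ) [IsFiniteMeasure μ] (hc : IsCompact (measSupport μ))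
    (q : ℂ[X]) : MemLp (fun z => q.eval z) 2 μ := by
  obtain ⟨C, hC⟩ := hc.exists_bound_of_continuousOn (f := fun z => q.eval z)
    q.continuous.continuousOn
  exact MemLp.of_bound q.continuous.aestronglyMeasurable C
    ((measSupport_mem_ae μ).mono fun w hw => hC w hw)

/-- The linear map sending a polynomial to its class in `L²(μ)`. -/
def polyL2 (μ : Measure ℂ) [IsFiniteMeasure μ] (hc : IsCompact (measSupport μ)) :
    ℂ[X] →ₗ[ℂ] Lp ℂ 2 μ where
  toFun q := (memLp_eval μ hc q).toLp _
  map_add' a b := by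
    rw [← MemLp.toLp_add]
    exact MemLp.toLp_congr _ _ (.of_forall fun z => by simp)
  map_smul' a b := by
    rw [RingHom.id_apply, ← MemLp.toLp_const_smul]
    exact MemLp.toLp_congr _ _ (.of_forall fun z => by simp)

section

variable {μ : Measure ℂ} [IsFiniteMeasure μ] (hc : IsCompact (measSupport μ))

lemma coeFn_polyL2 (q : ℂ[X]) : polyL2 μ hc q =ᵐ[μ] fun z => q.eval z :=
  (memLp_eval μ hc q).coeFn_toLp

lemma inner_polyL2 (a b : ℂ[X]) :
    inner ℂ (polyL2 μ hc a) (polyL2 μ hc b)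
      = ∫ z, (starRingEnd ℂ) (a.eval z) * b.eval z ∂μ := by
  rw [L2.inner_def]
  refine integral_congr_ae ?_
  filter_upwards [coeFn_polyL2 hc a, coeFn_polyL2 hc b] with z h1 h2
  rw [h1, h2, RCLike.inner_apply, mul_comm]

lemma norm_polyL2_sq (a : ℂ[X]) :
    ‖polyL2 μ hc a‖ ^ 2 = ∫ z, ‖a.eval z‖ ^ 2 ∂μ := by
  have h : ((‖polyL2 μ hc a‖ ^ 2 : ℝ) : ℂ) = ((∫ z, ‖a.eval z‖ ^ 2 ∂μ : ℝ) : ℂ) := by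
    rw [← integral_complex_ofReal]
    have := inner_self_eq_norm_sq_to_K (𝕜 := ℂ) (polyL2 μ hc a)
    rw [inner_polyL2] at this
    push_cast
    refine this.symm.trans (integral_congr_ae (.of_forall fun z => ?_))
    simp only [Complex.conj_mul']
  exact_mod_cast h

lemma re_inner_mul_nonneg (g s : ℂ[X]) (hg : ∀ w ∈ measSupport μ, 0 ≤ (g.eval w).re) :
    0 ≤ (inner ℂ (polyL2 μ hc s) (polyL2 μ hc (g * s))).re := by
  rw [L2.inner_def]
  have hint := L2.integrable_inner (𝕜 := ℂ) (polyL2 μ hc s) (polyL2 μ hc (g * s))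
  refine le_of_le_of_eq ?_ (integral_re hint)
  refine integral_nonneg_of_ae ?_
  filter_upwards [coeFn_polyL2 hc s, coeFn_polyL2 hc (g * s), measSupport_mem_ae μ] with z h1 h2 h3
  rw [h1, h2, RCLike.inner_apply, eval_mul, mul_assoc, Complex.mul_conj]
  simp only [Pi.zero_apply, RCLike.re_to_complex, Complex.re_mul_ofReal]
  exact mul_nonneg (hg z h3) (Complex.normSq_nonneg _)

lemma norm_polyL2_mul_le (g s : ℂ[X]) {D : ℝ} (hg : ∀ w ∈ measSupport μ, ‖g.eval w‖ ≤ D) :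
    ‖polyL2 μ hc (g * s)‖ ≤ D * ‖polyL2 μ hc s‖ := by
  refine Lp.norm_le_mul_norm_of_ae_le_mul ?_
  filter_upwards [coeFn_polyL2 hc s, coeFn_polyL2 hc (g * s), measSupport_mem_ae μ] with z h1 h2 h3
  rw [h1, h2, eval_mul, norm_mul]
  gcongr
  exact hg z h3

/-! ### Orthogonality and the pointwise bound off the convex hull -/

lemma inner_of_degree_lt {p : ℕ → ℂ[X]} {κ : ℕ → ℝ} (hON : OrthonormalPolys μ p κ) (n : ℕ) :
    ∀ m ≤ n, ∀ q : ℂ[X], q.degree < m → inner ℂ (polyL2 μ hc q) (polyL2 μ hc (p n)) = 0 := by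
  intro m
  induction m with
  | zero =>
    intro _ q hq
    have : q = 0 := degree_eq_bot.1 (by simpa using hq)
    simp [this]
  | succ m ih =>
    intro hm q hq
    obtain ⟨hdeg, hκ, hlc, horth⟩ := hON
    have hqm : q.degree ≤ m := by
      rw [degree_le_iff_coeff_zero]
      intro k hk
      exact coeff_eq_zero_of_degree_lt (hq.trans_le (by exact_mod_cast hk))
    -- Subtract the multiple of `p m` that cancels the coefficient of degree `m`.
    set r := q - (q.coeff m / (κ m : ℂ)) • p m with hr
    have hrdeg : r.degree < m := by
      rw [degree_lt_iff_coeff_zero]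
      intro k hk
      rcases hk.eq_or_lt with rfl | hk
      · have h1 : (p m).coeff m = κ m := by
          rw [← hlc m, leadingCoeff, natDegree_eq_of_degree_eq_some (hdeg m)]
        have h2 : (κ m : ℂ) ≠ 0 := by exact_mod_cast (hκ m).ne'
        simp [hr, h1, h2]
      · have h1 : q.coeff k = 0 :=
          coeff_eq_zero_of_degree_lt (hqm.trans_lt (by exact_mod_cast hk))
        have h2 : (p m).coeff k = 0 :=
          coeff_eq_zero_of_degree_lt (by rw [hdeg m]; exact_mod_cast hk)
        simp [hr, h1, h2]
    have hq' : q = r + (q.coeff m / (κ m : ℂ)) • p m := by simp [hr]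
    rw [hq', map_add, map_smul, inner_add_left, inner_smul_left, ih (by omega) r hrdeg,
      inner_polyL2, horth, if_neg (by omega)]
    simp

/-- For `z` off the convex hull, evaluation at `z` on polynomials of degree `< n` is bounded by a
multiple of `|p n z|`, the constant depending only on a lower bound for the distance
to a separating line and an upper bound for the distances from `z` to points of the support. -/
lemma norm_eval_le {p : ℕ → ℂ[X]} {κ : ℕ → ℝ} (hON : OrthonormalPolys μ p κ) {n : ℕ} {q : ℂ[X]}
    (hq : q.degree < n) {z e : ℂ} {δ D : ℝ} (hδ : 0 < δ) (hD0 : 0 ≤ D) (he : δ ≤ ‖e‖)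
    (hsep : ∀ w ∈ measSupport μ, ‖e‖ ^ 2 ≤ ((starRingEnd ℂ) e * (z - w)).re)
    (hD : ∀ w ∈ measSupport μ, ‖w - z‖ ≤ D) :
    ‖q.eval z‖ ≤ (1 + D / δ) * ‖polyL2 μ hc q‖ * ‖(p n).eval z‖ := by
  set P := p n with hP
  set T := polyL2 μ hc
  have hPdeg : P.degree = n := hON.1 n
  obtain ⟨s, hs⟩ : X - C z ∣ q.eval z • P - P.eval z • q := by
    rw [dvd_iff_isRoot]
    simp [mul_comm]
  have hsdeg : s.degree < n := by
    rcases eq_or_ne s 0 with rfl | hs0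
    · simp
    have h1 : ((X - C z) * s).degree ≤ (n : WithBot ℕ) := by
      rw [← hs]
      refine (degree_sub_le _ _).trans (max_le ?_ ?_)
      · exact (degree_smul_le _ _).trans hPdeg.le
      · exact (degree_smul_le _ _).trans hq.le
    rw [degree_mul, degree_X_sub_C, degree_eq_natDegree hs0] at h1
    rw [degree_eq_natDegree hs0]
    have h2 : 1 + s.natDegree ≤ n := by exact_mod_cast h1
    exact_mod_cast (by omega : s.natDegree < n)
  have horth : inner ℂ (T s) (T P) = 0 := inner_of_degree_lt hc hON n n le_rfl s hsdeg
  have hnormP : ‖T P‖ = 1 := by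
    have h1 : inner ℂ (T P) (T P) = 1 := by rw [inner_polyL2, hP, hON.2.2.2 n n, if_pos rfl]
    have h2 := inner_self_eq_norm_sq_to_K (𝕜 := ℂ) (T P)
    rw [h1] at h2
    have h3 : ‖T P‖ ^ 2 = 1 := by
      have : ((‖T P‖ ^ 2 : ℝ) : ℂ) = 1 := by push_cast; exact h2.symm
      exact_mod_cast this
    nlinarith [norm_nonneg (T P)]
  have hTs : T ((X - C z) * s) = q.eval z • T P - P.eval z • T q := by
    rw [← hs, map_sub, map_smul, map_smul]
  have he0 : 0 < ‖e‖ := hδ.trans_le he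
  have hpair : ‖e‖ ^ 2 * ‖T s‖ ^ 2 ≤ ‖e‖ * (‖P.eval z‖ * (‖T s‖ * ‖T q‖)) := by
    have h := re_inner_mul_nonneg hc (-(C ((starRingEnd ℂ) e) * (X - C z)) - C ((‖e‖ ^ 2 : ℝ) : ℂ)) s
      (fun w hw => by
        have := hsep w hw
        have h2 : (-(C ((starRingEnd ℂ) e) * (X - C z)) - C ((‖e‖ ^ 2 : ℝ) : ℂ)).eval w
            = (starRingEnd ℂ) e * (z - w) - ((‖e‖ ^ 2 : ℝ) : ℂ) := by
          simp only [eval_sub, eval_neg, eval_mul, eval_C, eval_X]; ring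
        rw [h2, Complex.sub_re, Complex.ofReal_re]
        linarith)
    have h3 : (-(C ((starRingEnd ℂ) e) * (X - C z)) - C ((‖e‖ ^ 2 : ℝ) : ℂ)) * s
        = -((starRingEnd ℂ) e • ((X - C z) * s)) - ((‖e‖ ^ 2 : ℝ) : ℂ) • s := by
      simp only [smul_eq_C_mul]; ring
    have h4 : inner ℂ (T s) (T ((-(C ((starRingEnd ℂ) e) * (X - C z)) - C ((‖e‖ ^ 2 : ℝ) : ℂ)) * s))
        = (starRingEnd ℂ) e * (P.eval z * inner ℂ (T s) (T q))
          - ((‖e‖ ^ 2 * ‖T s‖ ^ 2 : ℝ) : ℂ) := by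
      rw [h3, map_sub, map_neg, map_smul, map_smul, hTs, inner_sub_right, inner_neg_right,
        inner_smul_right, inner_smul_right, inner_sub_right, inner_smul_right, inner_smul_right,
        horth, inner_self_eq_norm_sq_to_K]
      push_cast [Complex.coe_algebraMap, RCLike.ofReal_eq_complex_ofReal]
      ring
    change 0 ≤ (inner ℂ (T s) (T _)).re at h
    rw [h4, Complex.sub_re, Complex.ofReal_re, sub_nonneg] at h
    refine h.trans ((Complex.re_le_norm _).trans ?_)
    rw [norm_mul, norm_mul, RCLike.norm_conj]
    gcongr
    exact norm_inner_le_norm _ _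
  have hsle : ‖T s‖ ≤ ‖P.eval z‖ * ‖T q‖ / δ := by
    rw [le_div_iff₀ hδ]
    rcases (norm_nonneg (T s)).eq_or_lt with h0 | h0
    · rw [← h0, zero_mul]; positivity
    · have h5 : (‖e‖ * ‖T s‖) * (‖T s‖ * ‖e‖) ≤ (‖e‖ * ‖T s‖) * (‖P.eval z‖ * ‖T q‖) := by
        linarith
      have h6 := le_of_mul_le_mul_left h5 (by positivity)
      exact (mul_le_mul_of_nonneg_left he h0.le).trans h6
  have hmul : ‖T ((X - C z) * s)‖ ≤ D * ‖T s‖ :=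
    norm_polyL2_mul_le hc (X - C z) s (fun w hw => by simpa using hD w hw)
  calc ‖q.eval z‖ = ‖q.eval z • T P‖ := by rw [norm_smul, hnormP, mul_one]
    _ = ‖P.eval z • T q + T ((X - C z) * s)‖ := by rw [hTs]; congr 1; abel
    _ ≤ ‖P.eval z‖ * ‖T q‖ + D * ‖T s‖ := by
      refine (norm_add_le _ _).trans ?_
      rw [norm_smul]
      gcongr
    _ ≤ ‖P.eval z‖ * ‖T q‖ + D * (‖P.eval z‖ * ‖T q‖ / δ) := by gcongr
    _ = _ := by ring

/-- Uniform version of `norm_eval_le` on a compact set disjoint from the convex hull. -/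
lemma exists_const_norm_eval_le (hi : (measSupport μ).Nonempty)
    {p : ℕ → ℂ[X]} {κ : ℕ → ℝ} (hON : OrthonormalPolys μ p κ) {K : Set ℂ} (hK : IsCompact K)
    (hKH : K ⊆ (convexHull ℝ (measSupport μ))ᶜ) :
    ∃ A : ℝ, 0 ≤ A ∧ ∀ z ∈ K, ∀ (n : ℕ) (q : ℂ[X]), q.degree < n →
      ‖q.eval z‖ ≤ A * ‖polyL2 μ hc q‖ * ‖(p n).eval z‖ := by
  have hH := isCompact_convexHull_complex hc
  obtain ⟨δ, hδ, hthick⟩ := hK.exists_thickening_subset_open hH.isClosed.isOpen_compl hKH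
  obtain ⟨D, hD⟩ := (hc.prod hK).exists_bound_of_continuousOn
    (f := fun x : ℂ × ℂ => x.1 - x.2) (by fun_prop)
  refine ⟨1 + |D| / δ, by positivity, fun z hz n q hq => ?_⟩
  obtain ⟨e, he, hsep⟩ := exists_halfPlane hH (convex_convexHull ℝ _) hi.convexHull
    (z := z) (fun w hw => by
      by_contra! hlt
      refine hthick (Metric.mem_thickening_iff.2 ⟨z, hz, ?_⟩) hw
      rwa [dist_comm, dist_eq_norm])
  exact norm_eval_le hc hON hq hδ (abs_nonneg D) he
    (fun w hw => hsep w (subset_convexHull ℝ _ hw))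
    (fun w hw => (hD (w, z) ⟨hw, hz⟩).trans (le_abs_self D))

end

theorem ratio_determined_by_norm_and_leading_coefficient
    (μ : Measure ℂ) [IsFiniteMeasure μ]
    (hc : IsCompact (measSupport μ)) (hi : (measSupport μ).Infinite)
    (p : ℕ → Polynomial ℂ) (κ : ℕ → ℝ) (hON : OrthonormalPolys μ p κ)
    (Q : ℕ → Polynomial ℂ) (hQdeg : ∀ n, (Q n).degree = n)
    (hQnorm : Tendsto (fun n => Real.sqrt (∫ z, ‖(Q n).eval z‖ ^ 2 ∂μ)) atTop (𝓝 1))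
    (hQlead : Tendsto (fun n => (Q n).leadingCoeff / (κ n : ℂ)) atTop (𝓝 1)) :
    (∀ z ∉ convexHull ℝ (measSupport μ),
       Tendsto (fun n => (Q n).eval z / (p n).eval z) atTop (𝓝 1)) ∧
    (∀ K : Set ℂ, IsCompact K → K ⊆ (convexHull ℝ (measSupport μ))ᶜ →
       TendstoUniformlyOn (fun n z => (Q n).eval z / (p n).eval z)
         (fun _ => (1 : ℂ)) atTop K) := by
  have hdeg := hON.1
  have hκ := hON.2.1
  have hlc := hON.2.2.1
  have horth := hON.2.2.2
  set T := polyL2 μ hc with hT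
  set c : ℕ → ℂ := fun n => (Q n).leadingCoeff / (κ n : ℂ) with hcdef
  set R : ℕ → ℂ[X] := fun n => Q n - c n • p n with hRdef
  have hRdeg : ∀ n, (R n).degree < n := fun n => by
    rw [degree_lt_iff_coeff_zero]
    intro k hk
    rcases hk.eq_or_lt with rfl | hk
    · have h1 : (p n).coeff n = κ n := by
        rw [← hlc n, leadingCoeff, natDegree_eq_of_degree_eq_some (hdeg n)]
      have h2 : (Q n).leadingCoeff = (Q n).coeff n := by
        rw [leadingCoeff, natDegree_eq_of_degree_eq_some (hQdeg n)]
      have h3 : (κ n : ℂ) ≠ 0 := by exact_mod_cast (hκ n).ne'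
      simp [hRdef, hcdef, h1, h2, h3]
    · have h1 : (Q n).coeff k = 0 :=
        coeff_eq_zero_of_degree_lt (by rw [hQdeg n]; exact_mod_cast hk)
      have h2 : (p n).coeff k = 0 :=
        coeff_eq_zero_of_degree_lt (by rw [hdeg n]; exact_mod_cast hk)
      simp [hRdef, h1, h2]
  have hQeq : ∀ n, Q n = c n • p n + R n := fun n => by simp [hRdef]
  have hnormQ : ∀ n, ‖T (Q n)‖ = Real.sqrt (∫ z, ‖(Q n).eval z‖ ^ 2 ∂μ) := fun n => by
    rw [← norm_polyL2_sq hc, Real.sqrt_sq (norm_nonneg _)]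
  have hnormp : ∀ n, ‖T (p n)‖ = 1 := fun n => by
    have h2 := inner_self_eq_norm_sq_to_K (𝕜 := ℂ) (T (p n))
    rw [inner_polyL2, horth n n, if_pos rfl] at h2
    have h3 : ‖T (p n)‖ ^ 2 = 1 := by
      have : ((‖T (p n)‖ ^ 2 : ℝ) : ℂ) = 1 := by push_cast; exact h2.symm
      exact_mod_cast this
    nlinarith [norm_nonneg (T (p n))]
  have hpyth : ∀ n, ‖T (R n)‖ ^ 2 = ‖T (Q n)‖ ^ 2 - ‖c n‖ ^ 2 := fun n => by
    have h0 : inner ℂ (T (R n)) (c n • T (p n)) = 0 := by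
      rw [inner_smul_right, inner_of_degree_lt hc hON n n le_rfl _ (hRdeg n), mul_zero]
    have h1 := norm_add_sq_eq_norm_sq_add_norm_sq_of_inner_eq_zero _ _ h0
    rw [norm_smul, hnormp] at h1
    rw [hQeq n, map_add, map_smul, add_comm (c n • T (p n))]
    nlinarith
  have hR0 : Tendsto (fun n => ‖T (R n)‖) atTop (𝓝 0) := by
    have h1 : Tendsto (fun n => ‖T (R n)‖ ^ 2) atTop (𝓝 0) := by
      have h2 : Tendsto (fun n => ‖T (Q n)‖) atTop (𝓝 1) := by simpa only [hnormQ] using hQnorm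
      have h3 := (h2.pow 2).sub (hQlead.norm.pow 2)
      simpa [hpyth] using h3
    simpa [Real.sqrt_sq (norm_nonneg _)] using h1.sqrt
  have key : ∀ K : Set ℂ, IsCompact K → K ⊆ (convexHull ℝ (measSupport μ))ᶜ →
       TendstoUniformlyOn (fun n z => (Q n).eval z / (p n).eval z)
         (fun _ => (1 : ℂ)) atTop K := by
    intro K hK hKH
    obtain ⟨A, hA, hbound⟩ := exists_const_norm_eval_le hc hi.nonempty hON hK hKH
    have hlim : Tendsto (fun n => ‖c n - 1‖ + A * ‖T (R n)‖) atTop (𝓝 0) := by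
      have h1 := (hQlead.sub_const 1).norm.add (hR0.const_mul A)
      simpa using h1
    rw [Metric.tendstoUniformlyOn_iff]
    intro ε hε
    filter_upwards [hlim.eventually_lt_const hε, eventually_ge_atTop 1] with n hn hn1 z hz
    -- The bound for the constant polynomial `1` excludes a zero of `p n` at `z`.
    have hpz : (p n).eval z ≠ 0 := by
      intro h0
      have h1 := hbound z hz n 1 (by rw [degree_one]; exact_mod_cast hn1)
      rw [h0] at h1
      norm_num at h1
    have hdiff : (Q n).eval z / (p n).eval z - 1
        = (c n - 1) + (R n).eval z / (p n).eval z := by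
      rw [hQeq n, eval_add, eval_smul, smul_eq_mul]
      field_simp
      ring
    rw [dist_comm, dist_eq_norm, hdiff]
    refine ((norm_add_le _ _).trans ?_).trans_lt hn
    gcongr
    rw [norm_div, div_le_iff₀ (norm_pos_iff.2 hpz)]
    exact hbound z hz n (R n) (hRdeg n)
  refine ⟨fun z hz => ?_, key⟩
  have h := key {z} isCompact_singleton (by simpa using hz)
  exact tendstoUniformlyOn_singleton_iff_tendsto.1 h
end
end

section
/- Let μ be a finite positive Borel measure on ℝ with compact infinite support whose set of accumulation points (essential support) equals [−2,2], and assume μ is regular, i.e. κ_n^{1/n} → 1 as n → ∞. For z ∈ ℂ ∖ [−2,2] let φ(z) denote the unique complex number w with |w| > 1 and w + 1/w = z (equivalently φ(z) = (z + √(z²−4))/2, the conformal map of ℂ ∖ [−2,2] onto the exterior of the closed unit disk). Then there exists a set 𝒩 ⊆ ℕ of asymptotic density 1 such that φ(z) p_{n−1}(z;μ) / p_n(z;μ) → 1 as n → ∞ through 𝒩, for every z ∉ supp(μ). -/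
/-!
# Ratio asymptotics along a set of density one

The orthonormal polynomials satisfy `x pₙ = aₙ pₙ₊₁ + bₙ pₙ + aₙ₋₁ pₙ₋₁` with `aₙ = κₙ / κₙ₊₁`. The
argument shows first that `aₙ → 1` and `bₙ → 0` in Cesàro mean square, then passes to a set of
density one, and finally reads off the ratio asymptotics from the recurrence.

*Cesàro convergence.* Only finitely many points of the support lie outside `[-2-ε, 2+ε]`. A
Chebyshev polynomial multiplied by a polynomial vanishing at these points is a test function in the
Christoffel extremal problem, and it forces `∑_{j<n} pⱼ(x)²` to grow at least like
`e^{2(Y-δ)n}` at `x = ±2 cosh Y` (`christoffel_lower`, `log_growth`). On the other hand, for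
`Y` large, the logarithm of the product of the ratios `aₙ pₙ₊₁ / pₙ` at `2 cosh Y` and `-2 cosh Y`
exceeds `2Y` by at most `e^{-2Y} (2 - 2 a² - b² + O(e^{-Y}))` (`log_ratio_le`). Summing, and using
`∏ aᵢ = κ₀ / κₙ`, which is subexponential by regularity, the Cesàro means of `2 a² + b²` are at most
`2 + o(1)` (`cesaro_upper`). Since also the Cesàro means of `log a` tend to `0` and
`a² - 1 - 2 log a ≥ (a - 1)²`, the Cesàro means of `(a - 1)² + b²` tend to `0` (`cesaro_nevai`).
Hence there is a set `𝒩` of density one along which `a_{n-k} → 1` and `b_{n-k} → 0` for every fixed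
shift `k` (`exists_density_one_tendsto_shifts`). This set does not depend on `z`.

*Ratios.* Let `z = w + w⁻¹` with `|w| > 1` lie off the support. The quantity `aₙ pₙ₊₁(z) - w pₙ(z)`
satisfies a first-order recursion with factor `w⁻¹` and a small forcing term, so along `𝒩` it is
`o(1) (∑_{j≤n} |pⱼ(z)|²)^{1/2}` (`norm_sub_le_ratioError`, `contraction_tendsto`). The
Christoffel–Darboux identity and the positive distance from `z` to the support bound this square
root by a multiple of `|pₙ(z)| + |pₙ₊₁(z)|` (`sum_normSq_le`). As `|w| > 1`, it follows that
`pₙ(z) = O(|pₙ₊₁(z)|)`, that `pₙ₊₁(z) ≠ 0`, and that `w pₙ(z) / pₙ₊₁(z) → 1` along `𝒩`. The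
estimate covers the real points `z` between isolated mass points, where zeros of `pₙ` may occur for
`n` outside `𝒩`.
-/

open MeasureTheory Filter Topology Polynomial

noncomputable section

/-- `p` is the sequence of orthonormal polynomials for a measure `μ` on `ℝ`, with positive
leading coefficients `κ`. -/
def OrthonormalPolysR (μ : Measure ℝ) (p : ℕ → Polynomial ℝ) (κ : ℕ → ℝ) : Prop :=
  (∀ n, (p n).degree = n) ∧ (∀ n, 0 < κ n) ∧ (∀ n, (p n).leadingCoeff = κ n) ∧
  (∀ n m, ∫ x, (p n).eval x * (p m).eval x ∂μ = if n = m then 1 else 0)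

/-- A set of natural numbers has asymptotic density one. -/
def hasDensityOne (S : Set ℕ) : Prop :=
  Filter.Tendsto (fun n : ℕ => (Nat.card ↥(S ∩ Set.Icc 1 n) : ℝ) / n) Filter.atTop (nhds 1)

/-! ### The inner product of `L²(μ)` on polynomials -/

/-- The `L²(μ)` inner product of two real polynomials. -/
def polyInner (μ : Measure ℝ) (f g : ℝ[X]) : ℝ := ∫ x, f.eval x * g.eval x ∂μ

lemma ae_mem_measSupport (μ : Measure ℝ) : ∀ᵐ x ∂μ, x ∈ measSupport μ := by
  rw [ae_iff]
  refine measure_null_of_locally_null _ fun x hx => ?_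
  simp only [measSupport, Set.mem_ofPred_eq, not_forall, not_not] at hx
  obtain ⟨U, hU, h0⟩ := hx
  exact ⟨U, mem_nhdsWithin_of_mem_nhds hU, h0⟩

lemma integrable_poly {μ : Measure ℝ} [IsFiniteMeasure μ] (hc : IsCompact (measSupport μ))
    (f : ℝ[X]) : Integrable (fun x => f.eval x) μ := by
  obtain ⟨C, hC⟩ := hc.exists_bound_of_continuousOn (f := fun x => f.eval x)
    f.continuous.continuousOn
  refine Integrable.of_bound f.continuous.aestronglyMeasurable C ?_
  filter_upwards [ae_mem_measSupport μ] with x hx using hC x hx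

lemma integrable_poly_mul {μ : Measure ℝ} [IsFiniteMeasure μ] (hc : IsCompact (measSupport μ))
    (f g : ℝ[X]) : Integrable (fun x => f.eval x * g.eval x) μ := by
  simpa using integrable_poly hc (f * g)

lemma polyInner_comm (μ : Measure ℝ) (f g : ℝ[X]) : polyInner μ f g = polyInner μ g f := by
  simp only [polyInner, mul_comm]

lemma polyInner_add_left {μ : Measure ℝ} [IsFiniteMeasure μ] (hc : IsCompact (measSupport μ))
    (f g h : ℝ[X]) :
    polyInner μ (f + g) h = polyInner μ f h + polyInner μ g h := by
  simp only [polyInner, eval_add, add_mul]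
  exact integral_add (integrable_poly_mul hc _ _) (integrable_poly_mul hc _ _)

lemma polyInner_C_mul_left (μ : Measure ℝ) (c : ℝ) (f g : ℝ[X]) :
    polyInner μ (C c * f) g = c * polyInner μ f g := by
  simp only [polyInner, eval_mul, eval_C, mul_assoc]
  exact integral_const_mul _ _

lemma polyInner_sub_left {μ : Measure ℝ} [IsFiniteMeasure μ] (hc : IsCompact (measSupport μ))
    (f g h : ℝ[X]) :
    polyInner μ (f - g) h = polyInner μ f h - polyInner μ g h := by
  simp only [polyInner, eval_sub, sub_mul]
  exact integral_sub (integrable_poly_mul hc _ _) (integrable_poly_mul hc _ _)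

lemma polyInner_sum_left {μ : Measure ℝ} [IsFiniteMeasure μ] (hc : IsCompact (measSupport μ))
    (s : Finset ℕ) (c : ℕ → ℝ) (f : ℕ → ℝ[X]) (g : ℝ[X]) :
    polyInner μ (∑ j ∈ s, C (c j) * f j) g = ∑ j ∈ s, c j * polyInner μ (f j) g := by
  classical
  induction s using Finset.induction_on with
  | empty => simp [polyInner]
  | insert i s hi ih =>
    rw [Finset.sum_insert hi, Finset.sum_insert hi, polyInner_add_left hc, ih,
      polyInner_C_mul_left]

lemma polyInner_X_mul (μ : Measure ℝ) (f g : ℝ[X]) :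
    polyInner μ (X * f) g = polyInner μ f (X * g) := by
  simp only [polyInner, eval_mul, eval_X]
  congr 1; ext x; ring

/-! ### Orthonormal polynomials: expansion and three-term recurrence -/

section ortho
variable {μ : Measure ℝ} {p : ℕ → ℝ[X]} {κ : ℕ → ℝ}

lemma polyInner_ortho (hON : OrthonormalPolysR μ p κ) (i j : ℕ) :
    polyInner μ (p i) (p j) = if i = j then 1 else 0 := hON.2.2.2 i j

lemma OrthonormalPolysR.coeff_self (hON : OrthonormalPolysR μ p κ) (n : ℕ) :
    (p n).coeff n = κ n := by
  rw [← hON.2.2.1 n, leadingCoeff, natDegree_eq_of_degree_eq_some (hON.1 n)]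

lemma exists_expansion (hON : OrthonormalPolysR μ p κ) (n : ℕ) :
    ∀ q : ℝ[X], q.degree < n → ∃ c : ℕ → ℝ, q = ∑ j ∈ Finset.range n, C (c j) * p j := by
  induction n with
  | zero =>
    intro q hq
    refine ⟨0, ?_⟩
    have : q = 0 := by
      rw [← degree_eq_bot]
      by_contra h
      rw [degree_eq_natDegree (by simpa using h)] at hq
      exact absurd hq (by simp)
    simp [this]
  | succ n ih =>
    intro q hq
    have hκ := (hON.2.1 n).ne'
    have hq' : (q - C (q.coeff n / κ n) * p n).degree < n := by
      rw [degree_lt_iff_coeff_zero] at hq ⊢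
      intro m hm
      rcases hm.eq_or_lt with rfl | hm
      · simp only [coeff_sub, coeff_C_mul, hON.coeff_self]
        field_simp
        simp
      · rw [coeff_sub, coeff_C_mul, hq m (by exact_mod_cast hm),
          coeff_eq_zero_of_degree_lt (p := p n) (by rw [hON.1 n]; exact_mod_cast hm)]
        simp
    obtain ⟨c, hc⟩ := ih _ hq'
    refine ⟨Function.update c n (q.coeff n / κ n), ?_⟩
    rw [Finset.sum_range_succ, Function.update_self,
      Finset.sum_congr rfl (g := fun j => C (c j) * p j), ← hc]
    · ring
    · intro j hj
      rw [Function.update_of_ne (Finset.mem_range.1 hj).ne]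

lemma polyInner_expansion [IsFiniteMeasure μ] (hc : IsCompact (measSupport μ))
    (hON : OrthonormalPolysR μ p κ)
    (n : ℕ) (c : ℕ → ℝ) (i : ℕ) :
    polyInner μ (∑ j ∈ Finset.range n, C (c j) * p j) (p i) = if i < n then c i else 0 := by
  rw [polyInner_sum_left hc]
  simp [polyInner_ortho hON]

lemma polyInner_eq_zero [IsFiniteMeasure μ] (hc : IsCompact (measSupport μ))
    (hON : OrthonormalPolysR μ p κ)
    {n : ℕ} {q : ℝ[X]} (hq : q.degree < n) : polyInner μ q (p n) = 0 := by
  obtain ⟨c, rfl⟩ := exists_expansion hON n q hq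
  rw [polyInner_expansion hc hON]
  simp

lemma polyInner_expansion_self [IsFiniteMeasure μ] (hc : IsCompact (measSupport μ))
    (hON : OrthonormalPolysR μ p κ)
    (n : ℕ) (c : ℕ → ℝ) :
    polyInner μ (∑ j ∈ Finset.range n, C (c j) * p j) (∑ j ∈ Finset.range n, C (c j) * p j)
      = ∑ j ∈ Finset.range n, c j ^ 2 := by
  rw [polyInner_sum_left hc]
  refine Finset.sum_congr rfl fun j hj => ?_
  rw [polyInner_comm, polyInner_expansion hc hON, if_pos (Finset.mem_range.1 hj)]
  ring

/-- The off-diagonal Jacobi coefficient `aₙ`, in the indexing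
`x pₙ = aₙ pₙ₊₁ + bₙ pₙ + aₙ₋₁ pₙ₋₁`. -/
def jacA (κ : ℕ → ℝ) (n : ℕ) : ℝ := κ n / κ (n + 1)

/-- The diagonal Jacobi coefficient `bₙ`, in the indexing
`x pₙ = aₙ pₙ₊₁ + bₙ pₙ + aₙ₋₁ pₙ₋₁`. -/
def jacB (μ : Measure ℝ) (p : ℕ → ℝ[X]) (n : ℕ) : ℝ := polyInner μ (X * p n) (p n)

lemma degree_X_mul_p (hON : OrthonormalPolysR μ p κ) (n : ℕ) :
    (X * p n).degree = ((n + 1 : ℕ) : WithBot ℕ) := by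
  rw [degree_mul, degree_X, hON.1 n]
  push_cast
  rw [add_comm]

lemma jacA_pos (hON : OrthonormalPolysR μ p κ) (n : ℕ) : 0 < jacA κ n :=
  div_pos (hON.2.1 n) (hON.2.1 (n + 1))

lemma polyInner_X_mul_succ [IsFiniteMeasure μ] (hc : IsCompact (measSupport μ))
    (hON : OrthonormalPolysR μ p κ)
    (n : ℕ) : polyInner μ (X * p n) (p (n + 1)) = jacA κ n := by
  have hq : (X * p n - C (jacA κ n) * p (n + 1)).degree < ((n + 1 : ℕ) : WithBot ℕ) := by
    rw [degree_lt_iff_coeff_zero]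
    intro m hm
    rcases hm.eq_or_lt with rfl | hm
    · rw [coeff_sub, coeff_C_mul, coeff_X_mul, hON.coeff_self, hON.coeff_self, jacA]
      have := (hON.2.1 (n + 1)).ne'
      field_simp
      simp
    · rw [coeff_sub, coeff_C_mul,
        coeff_eq_zero_of_degree_lt (by rw [degree_X_mul_p hON]; exact_mod_cast hm),
        coeff_eq_zero_of_degree_lt (by rw [hON.1]; exact_mod_cast hm)]
      simp
  have h := polyInner_eq_zero hc hON hq
  rw [polyInner_sub_left hc, polyInner_C_mul_left, polyInner_ortho hON] at h
  simp at h
  linarith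

lemma recurrence_aux [IsFiniteMeasure μ] (hc : IsCompact (measSupport μ))
    (hON : OrthonormalPolysR μ p κ) (n : ℕ) :
    X * p n = ∑ j ∈ Finset.range (n + 2), C (polyInner μ (X * p n) (p j)) * p j := by
  obtain ⟨c, h⟩ := exists_expansion hON (n + 2) (X * p n)
    (by rw [degree_X_mul_p hON]; exact_mod_cast Nat.lt_succ_self _)
  conv_lhs => rw [h]
  refine Finset.sum_congr rfl fun j hj => ?_
  rw [h, polyInner_expansion hc hON, if_pos (Finset.mem_range.1 hj)]

lemma recurrence_zero [IsFiniteMeasure μ] (hc : IsCompact (measSupport μ))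
    (hON : OrthonormalPolysR μ p κ) :
    X * p 0 = C (jacA κ 0) * p 1 + C (jacB μ p 0) * p 0 := by
  have h := recurrence_aux hc hON 0
  rw [Finset.sum_range_succ, Finset.sum_range_one, polyInner_X_mul_succ hc hON] at h
  rw [add_comm]
  exact h

lemma recurrence_succ [IsFiniteMeasure μ] (hc : IsCompact (measSupport μ))
    (hON : OrthonormalPolysR μ p κ) (n : ℕ) :
    X * p (n + 1) = C (jacA κ (n + 1)) * p (n + 2) + C (jacB μ p (n + 1)) * p (n + 1)
      + C (jacA κ n) * p n := by
  have h := recurrence_aux hc hON (n + 1)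
  rw [Finset.sum_range_succ, Finset.sum_range_succ, Finset.sum_range_succ,
    polyInner_X_mul_succ hc hON, Finset.sum_eq_zero, polyInner_X_mul μ (p (n + 1)) (p n),
    polyInner_comm, polyInner_X_mul_succ hc hON, zero_add] at h
  · rw [h, jacB]
    ring
  · intro j hj
    rw [polyInner_X_mul, polyInner_comm, polyInner_eq_zero hc hON, map_zero, zero_mul]
    rw [degree_X_mul_p hON]
    exact_mod_cast Nat.succ_lt_succ (Finset.mem_range.1 hj)

/-- Multiplication by `x` on `L²(μ)` has norm at most `R` when the support lies in `[-R, R]`. -/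
lemma abs_polyInner_X_mul_le [IsFiniteMeasure μ] (hc : IsCompact (measSupport μ))
    (hON : OrthonormalPolysR μ p κ)
    {R : ℝ} (hR : ∀ x ∈ measSupport μ, |x| ≤ R) (i j : ℕ) :
    |polyInner μ (X * p i) (p j)| ≤ R := by
  have h1 : ∀ᵐ x ∂μ, ‖(X * p i).eval x * (p j).eval x‖ ≤
      R / 2 * ((p i).eval x * (p i).eval x + (p j).eval x * (p j).eval x) := by
    filter_upwards [ae_mem_measSupport μ] with x hx
    have h := hR x hx
    rw [eval_mul, eval_X, mul_assoc, norm_mul, Real.norm_eq_abs, Real.norm_eq_abs, abs_mul]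
    have h0 : 0 ≤ R := (abs_nonneg x).trans h
    have h2 : |(p i).eval x| * |(p j).eval x| ≤
        ((p i).eval x * (p i).eval x + (p j).eval x * (p j).eval x) / 2 := by
      nlinarith [sq_nonneg (|(p i).eval x| - |(p j).eval x|), abs_mul_abs_self ((p i).eval x),
        abs_mul_abs_self ((p j).eval x)]
    calc _ ≤ R * (((p i).eval x * (p i).eval x + (p j).eval x * (p j).eval x) / 2) := by gcongr
      _ = _ := by ring
  have h3 := norm_integral_le_of_norm_le
    (((integrable_poly_mul hc (p i) (p i)).add (integrable_poly_mul hc (p j) (p j))).const_mul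
      (R / 2)) h1
  simp only [Pi.add_apply] at h3
  rw [integral_const_mul, integral_add (integrable_poly_mul hc _ _) (integrable_poly_mul hc _ _),
    hON.2.2.2, hON.2.2.2] at h3
  simp only [if_true] at h3
  rw [polyInner, ← Real.norm_eq_abs]
  linarith

lemma jacA_le [IsFiniteMeasure μ] (hc : IsCompact (measSupport μ))
    (hON : OrthonormalPolysR μ p κ)
    {R : ℝ} (hR : ∀ x ∈ measSupport μ, |x| ≤ R) (n : ℕ) : jacA κ n ≤ R := by
  rw [← polyInner_X_mul_succ hc hON]
  exact (le_abs_self _).trans (abs_polyInner_X_mul_le hc hON hR _ _)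

lemma abs_jacB_le [IsFiniteMeasure μ] (hc : IsCompact (measSupport μ))
    (hON : OrthonormalPolysR μ p κ)
    {R : ℝ} (hR : ∀ x ∈ measSupport μ, |x| ≤ R) (n : ℕ) : |jacB μ p n| ≤ R :=
  abs_polyInner_X_mul_le hc hON hR _ _

/-- The extremal property of the Christoffel function: a polynomial `q` of degree less than `n`
satisfies `q(x)² ≤ ‖q‖² ∑_{j<n} pⱼ(x)²`. -/
lemma sq_eval_le [IsFiniteMeasure μ] (hc : IsCompact (measSupport μ))
    (hON : OrthonormalPolysR μ p κ)
    {n : ℕ} {q : ℝ[X]} (hq : q.degree < n) (x : ℝ) :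
    q.eval x ^ 2 ≤ polyInner μ q q * ∑ j ∈ Finset.range n, (p j).eval x ^ 2 := by
  obtain ⟨c, rfl⟩ := exists_expansion hON n q hq
  rw [polyInner_expansion_self hc hON, eval_finsetSum]
  simp only [eval_mul, eval_C]
  exact Finset.sum_mul_sq_le_sq_mul_sq _ _ _

end ortho

/-! ### Exponential growth of the Christoffel–Darboux sums off the support -/

lemma abs_chebT_of_abs_eq_cosh (m : ℕ) {t s : ℝ} (h : |t| = Real.cosh s) :
    |(Chebyshev.T ℝ m).eval t| = Real.cosh (m * s) := by
  have h1 : |(Chebyshev.T ℝ m).eval (|t|)| = |(Chebyshev.T ℝ m).eval t| := by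
    rcases abs_choice t with h2 | h2 <;> rw [h2]
    rw [Chebyshev.T_eval_neg, abs_mul]
    rcases Int.units_eq_one_or (m : ℤ).negOnePow with h3 | h3 <;> simp [h3]
  rw [← h1, h, Chebyshev.T_real_cosh, abs_of_pos (Real.cosh_pos _)]
  simp

lemma abs_chebT_le (m : ℕ) {t s : ℝ} (h : |t| ≤ Real.cosh s) :
    |(Chebyshev.T ℝ m).eval t| ≤ Real.cosh (m * s) := by
  rcases le_total |t| 1 with h1 | h1
  · exact (Chebyshev.abs_eval_T_real_le_one m h1).trans (Real.one_le_cosh _)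
  · have h2 := Real.cosh_arcosh h1
    rw [abs_chebT_of_abs_eq_cosh m h2.symm, Real.cosh_le_cosh, abs_mul, abs_mul]
    rw [← h2, Real.cosh_le_cosh] at h
    gcongr

/-- The Chebyshev polynomial of degree `m` for the interval `[-2, 2]`. -/
def chebTwo (m : ℕ) : ℝ[X] := (Chebyshev.T ℝ m).comp (C (1 / 2) * X)

lemma chebTwo_eval (m : ℕ) (t : ℝ) : (chebTwo m).eval t = (Chebyshev.T ℝ m).eval (t / 2) := by
  simp only [chebTwo, eval_comp, eval_mul, eval_C, eval_X]
  congr 1; ring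

lemma chebTwo_natDegree_le (m : ℕ) : (chebTwo m).natDegree ≤ m := by
  rw [chebTwo, natDegree_comp, natDegree_C_mul_X _ (by norm_num), Chebyshev.natDegree_T]
  simp

lemma finite_support_outside {S : Set ℝ} (hc : IsCompact S)
    (hess : {x : ℝ | AccPt x (𝓟 S)} = Set.Icc (-2) 2) {t : ℝ} (ht : 2 < t) :
    (S ∩ {x | t ≤ |x|}).Finite := by
  by_contra hinf
  have hcl : IsClosed {x : ℝ | t ≤ |x|} := isClosed_le continuous_const continuous_abs
  obtain ⟨x, hx, hacc⟩ := Set.Infinite.exists_accPt_of_subset_isCompact hinf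
    (hc.inter_right hcl) subset_rfl
  have h1 : x ∈ {x : ℝ | AccPt x (𝓟 S)} := hacc.mono (by simp)
  rw [hess, Set.mem_Icc, ← abs_le] at h1
  exact absurd (hx.2.trans h1) (not_le.2 ht)

lemma cosh_le_exp {s : ℝ} (hs : 0 ≤ s) : Real.cosh s ≤ Real.exp s := by
  rw [Real.cosh_eq]
  have : Real.exp (-s) ≤ Real.exp s := Real.exp_le_exp.2 (by linarith)
  linarith

lemma exp_div_two_le_cosh (s : ℝ) : Real.exp s / 2 ≤ Real.cosh s := by
  rw [Real.cosh_eq]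
  have := Real.exp_pos (-s)
  linarith

/-- Lower bound for the Christoffel–Darboux sums at a real point `x = ±2 cosh Y` off the support.
The test polynomial is a Chebyshev polynomial, which is at most `e^{mη}` on
`[-2 cosh η, 2 cosh η]`, times a fixed factor vanishing on the finitely many points of the support
outside that interval. -/
lemma christoffel_lower {μ : Measure ℝ} [IsFiniteMeasure μ] {p : ℕ → ℝ[X]} {κ : ℕ → ℝ}
    (hc : IsCompact (measSupport μ))
    (hess : {x : ℝ | AccPt x (𝓟 (measSupport μ))} = Set.Icc (-2) 2)
    (hON : OrthonormalPolysR μ p κ) {η Y x : ℝ} (hη : 0 < η) (hx : |x| = 2 * Real.cosh Y)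
    (hxs : x ∉ measSupport μ) :
    ∃ c > 0, ∃ N : ℕ, ∀ n ≥ N, c * Real.exp (2 * n * (Y - η)) ≤
      ∑ j ∈ Finset.range n, (p j).eval x ^ 2 := by
  have ht : 2 < 2 * Real.cosh η := by
    have := Real.one_lt_cosh.2 hη.ne'
    linarith
  have hfin := finite_support_outside hc hess ht
  set F := hfin.toFinset with hF
  set P : ℝ[X] := ∏ f ∈ F, (X - C f) with hP
  have hPdeg : P.natDegree = F.card := natDegree_finsetProd_X_sub_C_eq_card F id
  have hPx : P.eval x ≠ 0 := by
    rw [hP, eval_prod, Finset.prod_ne_zero_iff]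
    intro f hf h0
    rw [eval_sub, eval_X, eval_C, sub_eq_zero] at h0
    rw [hF, Set.Finite.mem_toFinset] at hf
    exact hxs (h0 ▸ hf.1)
  obtain ⟨M, hM⟩ := hc.exists_bound_of_continuousOn (f := fun x => P.eval x)
    P.continuous.continuousOn
  set B : ℝ := M ^ 2 * μ.real Set.univ + 1 with hB
  have hBpos : 0 < B := by positivity
  refine ⟨P.eval x ^ 2 / (4 * B) * Real.exp (-(2 * (F.card + 1) * (Y - η))), by positivity,
    F.card + 1, fun n hn => ?_⟩
  obtain ⟨m, rfl⟩ := Nat.exists_eq_add_of_le hn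
  have hdeg : (P * chebTwo m).degree < ((F.card + 1 + m : ℕ) : WithBot ℕ) := by
    refine lt_of_le_of_lt degree_le_natDegree ?_
    have h1 := natDegree_mul_le (p := P) (q := chebTwo m)
    have h2 := chebTwo_natDegree_le m
    exact_mod_cast (show (P * chebTwo m).natDegree < F.card + 1 + m by omega)
  have h1 := sq_eval_le hc hON hdeg x
  have h2 : polyInner μ (P * chebTwo m) (P * chebTwo m) ≤ B * Real.exp (m * η) ^ 2 := by
    have h3 : ∀ᵐ y ∂μ, ‖(P * chebTwo m).eval y * (P * chebTwo m).eval y‖ ≤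
        M ^ 2 * Real.exp (m * η) ^ 2 := by
      filter_upwards [ae_mem_measSupport μ] with y hy
      have h4 : |(P * chebTwo m).eval y| ≤ M * Real.exp (m * η) := by
        rw [eval_mul, abs_mul]
        have hM0 : |P.eval y| ≤ M := hM y hy
        by_cases hyt : 2 * Real.cosh η ≤ |y|
        · have h5 : P.eval y = 0 := by
            rw [hP, eval_prod, Finset.prod_eq_zero_iff]
            exact ⟨y, by rw [hF, Set.Finite.mem_toFinset]; exact ⟨hy, hyt⟩, by simp⟩
          rw [h5] at hM0 ⊢
          rw [abs_zero] at hM0 ⊢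
          rw [zero_mul]
          positivity
        · have h5 : |(chebTwo m).eval y| ≤ Real.exp (m * η) := by
            rw [chebTwo_eval]
            refine (abs_chebT_le m (s := η) ?_).trans (cosh_le_exp (by positivity))
            rw [abs_div, abs_two]
            linarith
          have := (abs_nonneg _).trans hM0
          gcongr
      rw [Real.norm_eq_abs, abs_mul, ← sq, ← mul_pow]
      gcongr
    have h6 := (le_abs_self _).trans (norm_integral_le_of_norm_le_const h3)
    rw [polyInner]
    refine h6.trans ?_
    rw [hB]
    nlinarith [sq_nonneg (Real.exp (m * η))]
  have h3 : Real.exp (m * Y) / 2 ≤ |(chebTwo m).eval x| := by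
    rw [chebTwo_eval, abs_chebT_of_abs_eq_cosh m (s := Y)]
    · exact exp_div_two_le_cosh _
    · rw [abs_div, hx, abs_two]; ring
  have h4 : P.eval x ^ 2 * (Real.exp (m * Y) / 2) ^ 2 ≤ (P * chebTwo m).eval x ^ 2 := by
    rw [eval_mul, mul_pow, ← sq_abs ((chebTwo m).eval x)]
    gcongr
  set K := ∑ j ∈ Finset.range (F.card + 1 + m), (p j).eval x ^ 2 with hK
  have hK0 : 0 ≤ K := Finset.sum_nonneg fun _ _ => sq_nonneg _
  have h5 : P.eval x ^ 2 * (Real.exp (m * Y) / 2) ^ 2 ≤ B * Real.exp (m * η) ^ 2 * K :=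
    h4.trans (h1.trans (by gcongr))
  have h6 : Real.exp (-(2 * (F.card + 1) * (Y - η))) *
      Real.exp (2 * (F.card + 1 + m : ℕ) * (Y - η)) * Real.exp (m * η) ^ 2
        = Real.exp (m * Y) ^ 2 := by
    rw [← Real.exp_nat_mul, ← Real.exp_nat_mul, ← Real.exp_add, ← Real.exp_add]
    congr 1
    push_cast
    ring
  have h7 : 0 < Real.exp (m * η) ^ 2 := by positivity
  rw [mul_assoc]
  refine le_of_mul_le_mul_right ?_ h7
  rw [mul_assoc, h6, div_mul_eq_mul_div, div_le_iff₀ (by positivity)]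
  linarith

/-! ### Positive solutions of the recurrence and the Cesàro bound on Jacobi coefficients -/

/-- `q` solves, with `q 0 > 0`, the three-term recurrence with coefficients `a`, `β` bounded by `R`
at a point `x ≥ 3R`; this makes `q` positive and nondecreasing. It applies both to
`pₙ(x)` and to `(-1)ⁿ pₙ(-x)`, the latter with `β = -b`. -/
structure PosRec (a β q : ℕ → ℝ) (x R : ℝ) : Prop where
  a_pos : ∀ n, 0 < a n
  a_le : ∀ n, a n ≤ R
  β_le : ∀ n, |β n| ≤ R
  q0 : 0 < q 0
  r0 : a 0 * q 1 = (x - β 0) * q 0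
  rs : ∀ n, a (n + 1) * q (n + 2) = (x - β (n + 1)) * q (n + 1) - a n * q n
  hx : 3 * R ≤ x

namespace PosRec
variable {a β q : ℕ → ℝ} {x R : ℝ}

lemma R_pos (h : PosRec a β q x R) : 0 < R := (h.a_pos 0).trans_le (h.a_le 0)

lemma pos_and_le (h : PosRec a β q x R) (n : ℕ) : 0 < q n ∧ q n ≤ q (n + 1) := by
  have hR := h.R_pos
  have hx := h.hx
  induction n with
  | zero =>
    refine ⟨h.q0, ?_⟩
    have h1 := (abs_le.1 (h.β_le 0)).2
    have h2 : R * q 0 ≤ a 0 * q 1 := by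
      rw [h.r0]
      exact mul_le_mul_of_nonneg_right (by linarith) h.q0.le
    have h3 : 0 < q 1 := by
      have : 0 < a 0 * q 1 := (mul_pos hR h.q0).trans_le h2
      exact (mul_pos_iff_of_pos_left (h.a_pos 0)).1 this
    have h4 : a 0 * q 1 ≤ R * q 1 := mul_le_mul_of_nonneg_right (h.a_le 0) h3.le
    exact le_of_mul_le_mul_left (h2.trans h4) hR
  | succ n ih =>
    obtain ⟨h0, h01⟩ := ih
    have hp : 0 < q (n + 1) := h0.trans_le h01
    refine ⟨hp, ?_⟩
    have h1 := (abs_le.1 (h.β_le (n + 1))).2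
    have h2 : R * q (n + 1) ≤ a (n + 1) * q (n + 2) := by
      rw [h.rs]
      have h5 : a n * q n ≤ R * q (n + 1) := mul_le_mul (h.a_le n) h01 h0.le hR.le
      have h6 : (2 * R) * q (n + 1) ≤ (x - β (n + 1)) * q (n + 1) :=
        mul_le_mul_of_nonneg_right (by linarith) hp.le
      linarith
    have h3 : 0 < q (n + 2) := by
      have : 0 < a (n + 1) * q (n + 2) := (mul_pos hR hp).trans_le h2
      exact (mul_pos_iff_of_pos_left (h.a_pos _)).1 this
    have h4 : a (n + 1) * q (n + 2) ≤ R * q (n + 2) :=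
      mul_le_mul_of_nonneg_right (h.a_le _) h3.le
    exact le_of_mul_le_mul_left (h2.trans h4) hR

lemma pos (h : PosRec a β q x R) (n : ℕ) : 0 < q n := (h.pos_and_le n).1

lemma mono (h : PosRec a β q x R) : Monotone q :=
  monotone_nat_of_le_succ fun n => (h.pos_and_le n).2

lemma ratio_pos (h : PosRec a β q x R) (n : ℕ) : 0 < a n * q (n + 1) / q n :=
  div_pos (mul_pos (h.a_pos n) (h.pos _)) (h.pos n)

lemma step_le (h : PosRec a β q x R) (n : ℕ) : a n * q (n + 1) ≤ (x + R) * q n := by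
  cases n with
  | zero =>
    rw [zero_add, h.r0]
    have := (abs_le.1 (h.β_le 0)).1
    exact mul_le_mul_of_nonneg_right (by linarith) h.q0.le
  | succ n =>
    rw [h.rs]
    have := (abs_le.1 (h.β_le (n + 1))).1
    have h1 := mul_pos (h.a_pos n) (h.pos n)
    have h2 : (x - β (n + 1)) * q (n + 1) ≤ (x + R) * q (n + 1) :=
      mul_le_mul_of_nonneg_right (by linarith) (h.pos _).le
    linarith

lemma ratio_succ_le (h : PosRec a β q x R) (n : ℕ) :
    a (n + 1) * q (n + 2) / q (n + 1) ≤ x - a n ^ 2 / (x + R) - β (n + 1) := by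
  have hq := h.pos (n + 1)
  have hxR : 0 < x + R := by linarith [h.R_pos, h.hx]
  rw [div_le_iff₀ hq, h.rs]
  have h1 : a n ^ 2 / (x + R) * q (n + 1) ≤ a n * q n := by
    rw [div_mul_eq_mul_div, div_le_iff₀ hxR]
    have := mul_le_mul_of_nonneg_left (h.step_le n) (h.a_pos n).le
    linarith
  linarith

lemma sum_log_ratio (h : PosRec a β q x R) (n : ℕ) :
    ∑ i ∈ Finset.range n, Real.log (a i * q (i + 1) / q i) =
      ∑ i ∈ Finset.range n, Real.log (a i) + Real.log (q n) - Real.log (q 0) := by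
  induction n with
  | zero => simp
  | succ n ih =>
    rw [Finset.sum_range_succ, Finset.sum_range_succ, ih,
      Real.log_div (mul_pos (h.a_pos n) (h.pos _)).ne' (h.pos n).ne',
      Real.log_mul (h.a_pos n).ne' (h.pos _).ne']
    ring

end PosRec

/-- One step of the comparison with the free recurrence at `x = ±2 cosh Y`: the logarithm of the
product of the two ratios exceeds `2Y` by at most `e^{-2Y} (2 - 2a² - b² + O(e^{-Y}))`. The linear
terms in `b` cancel between the two points. -/
lemma log_ratio_le {a b q q' : ℕ → ℝ} {Y R : ℝ} (hY : 0 ≤ Y)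
    (h : PosRec a b q (2 * Real.cosh Y) R) (h' : PosRec a (fun n => -b n) q' (2 * Real.cosh Y) R)
    (n : ℕ) :
    Real.log (a (n + 1) * q (n + 2) / q (n + 1)) + Real.log (a (n + 1) * q' (n + 2) / q' (n + 1))
      - 2 * Y ≤ (2 - 2 * a n ^ 2 - b (n + 1) ^ 2 + (1 + 2 * R ^ 3 + R ^ 4) / Real.exp Y)
        / Real.exp Y ^ 2 := by
  have hR := h.R_pos
  set W := Real.exp Y with hW
  have hW1 : 1 ≤ W := Real.one_le_exp hY
  have hW0 : 0 < W := by linarith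
  have hx : 2 * Real.cosh Y = W + W⁻¹ := by
    rw [Real.cosh_eq, Real.exp_neg]; ring
  have e1 := h.ratio_succ_le n
  have e2 := h'.ratio_succ_le n
  have p1 := h.ratio_pos (n + 1)
  have p2 := h'.ratio_pos (n + 1)
  rw [hx] at e1 e2
  set r := a (n + 1) * q (n + 2) / q (n + 1)
  set r' := a (n + 1) * q' (n + 2) / q' (n + 1)
  set c := a n ^ 2 / (W + W⁻¹ + R) with hc
  have hWi : 0 < W⁻¹ := inv_pos.2 hW0
  have hxR : 0 < W + W⁻¹ + R := by linarith
  have ha0 := h.a_pos n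
  have ha2 : a n ^ 2 ≤ R ^ 2 := by gcongr; exact h.a_le n
  have hc0 : 0 ≤ c := by positivity
  have hcle : c ≤ R ^ 2 / W := by
    rw [hc]; gcongr; linarith
  have hxc : (W + W⁻¹) * c = a n ^ 2 - c * R := by
    rw [hc]; field_simp; ring
  have hprod : r * r' ≤ W ^ 2 + (2 - 2 * a n ^ 2 - b (n + 1) ^ 2
      + (1 + 2 * R ^ 3 + R ^ 4) / W) := by
    have h1 : r * r' ≤ (W + W⁻¹ - c - b (n + 1)) * (W + W⁻¹ - c - -b (n + 1)) :=
      mul_le_mul e1 e2 p2.le (p1.le.trans e1)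
    have hWW : W * W⁻¹ = 1 := mul_inv_cancel₀ hW0.ne'
    have h2 : (W + W⁻¹ - c - b (n + 1)) * (W + W⁻¹ - c - -b (n + 1)) =
        W ^ 2 + 2 + W⁻¹ ^ 2 - 2 * (a n ^ 2 - c * R) + c ^ 2 - b (n + 1) ^ 2 := by
      rw [← hxc]
      linear_combination 2 * hWW
    have h3 : W⁻¹ ^ 2 ≤ 1 / W := by
      rw [one_div, sq]
      exact mul_le_of_le_one_left hWi.le (inv_le_one_of_one_le₀ hW1)
    have h4 : c * R ≤ R ^ 3 / W := by
      calc c * R ≤ R ^ 2 / W * R := by gcongr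
        _ = _ := by ring
    have h5 : c ^ 2 ≤ R ^ 4 / W := by
      calc c ^ 2 ≤ (R ^ 2 / W) ^ 2 := by gcongr
        _ = R ^ 4 * W⁻¹ ^ 2 := by field_simp
        _ ≤ R ^ 4 * (1 / W) := by gcongr
        _ = _ := by ring
    have h6 : (1 + 2 * R ^ 3 + R ^ 4) / W = 1 / W + 2 * (R ^ 3 / W) + R ^ 4 / W := by ring
    linarith
  have hlog : Real.log r + Real.log r' - 2 * Y = Real.log (r * r' / W ^ 2) := by
    rw [Real.log_div (mul_pos p1 p2).ne' (by positivity), Real.log_mul p1.ne' p2.ne',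
      Real.log_pow, hW, Real.log_exp]
    push_cast
    ring
  rw [hlog]
  refine (Real.log_le_sub_one_of_pos (by positivity)).trans ?_
  rw [le_div_iff₀ (by positivity), sub_mul, div_mul_cancel₀ _ (by positivity)]
  linarith

/-- If both recurrences at `±2 cosh Y` grow at least like `e^{Yn}` (to exponential order) for all
large `Y`, and the geometric means of `a` are asymptotically at least one, then
`2 aᵢ² + bᵢ₊₁²` is at most `2` in Cesàro mean. -/
lemma cesaro_upper {a b : ℕ → ℝ} {R : ℝ}
    (hL : ∀ δ > 0, ∀ᶠ n : ℕ in atTop, -δ * n ≤ ∑ i ∈ Finset.range n, Real.log (a i))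
    (H : ∀ᶠ Y : ℝ in atTop, ∃ q q' : ℕ → ℝ, PosRec a b q (2 * Real.cosh Y) R ∧
      PosRec a (fun n => -b n) q' (2 * Real.cosh Y) R ∧
      (∀ δ > 0, ∀ᶠ n : ℕ in atTop, (Y - δ) * n ≤ Real.log (q n)) ∧
      (∀ δ > 0, ∀ᶠ n : ℕ in atTop, (Y - δ) * n ≤ Real.log (q' n)))
    {ε : ℝ} (hε : 0 < ε) :
    ∀ᶠ n : ℕ in atTop, ∑ i ∈ Finset.range n, (2 * a i ^ 2 + b (i + 1) ^ 2 - 2) ≤ ε * n := by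
  set D := 1 + 2 * R ^ 3 + R ^ 4 with hD
  have hDlim : Tendsto (fun Y => D / Real.exp Y) atTop (𝓝 0) :=
    Real.tendsto_exp_atTop.const_div_atTop D
  obtain ⟨Y, ⟨q, q', h, h', hq, hq'⟩, hDY, hY⟩ :=
    (H.and ((hDlim.eventually_le_const (half_pos hε)).and (eventually_ge_atTop 0))).exists
  set W := Real.exp Y with hW
  have hW0 : 0 < W := Real.exp_pos Y
  set δ := ε / (18 * W ^ 2) with hδ
  have hδ0 : 0 < δ := by positivity
  set K := Real.log (q 0) + Real.log (q' 0) + Real.log (a 0 * q 1 / q 0)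
    + Real.log (a 0 * q' 1 / q' 0) - 2 * Y with hK
  have hS := tendsto_add_atTop_nat 1
  filter_upwards [hS.eventually (hL δ hδ0), hS.eventually (hq δ hδ0), hS.eventually (hq' δ hδ0),
    eventually_ge_atTop 1, tendsto_natCast_atTop_atTop.eventually_ge_atTop (K / δ)]
    with n h1 h2 h3 h4 h5
  have hn : (1 : ℝ) ≤ n := by exact_mod_cast h4
  have s1 := h.sum_log_ratio (n + 1)
  have s2 := h'.sum_log_ratio (n + 1)
  rw [Finset.sum_range_succ'] at s1 s2
  have s3 := Finset.sum_le_sum fun i (_ : i ∈ Finset.range n) => log_ratio_le hY h h' i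
  rw [Finset.sum_sub_distrib, Finset.sum_add_distrib, ← Finset.sum_div, Finset.sum_const,
    Finset.card_range, nsmul_eq_mul, le_div_iff₀ (by positivity)] at s3
  have s4 : ∑ i ∈ Finset.range n, (2 - 2 * a i ^ 2 - b (i + 1) ^ 2 + D / W) =
      n * (D / W) - ∑ i ∈ Finset.range n, (2 * a i ^ 2 + b (i + 1) ^ 2 - 2) := by
    rw [Finset.sum_add_distrib, Finset.sum_const, Finset.card_range, nsmul_eq_mul, add_comm,
      sub_eq_add_neg, ← Finset.sum_neg_distrib]
    congr 1
    exact Finset.sum_congr rfl fun i _ => by ring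
  rw [s4] at s3
  push_cast at h1 h2 h3
  have hKn : K ≤ δ * n := by
    rw [div_le_iff₀ hδ0] at h5
    linarith
  have hlow : -(9 * δ * n) ≤ ∑ i ∈ Finset.range n, Real.log (a (i + 1) * q (i + 2) / q (i + 1)) +
      ∑ i ∈ Finset.range n, Real.log (a (i + 1) * q' (i + 2) / q' (i + 1)) - n * (2 * Y) := by
    simp only [zero_add, add_assoc, Nat.reduceAdd] at s1 s2
    have hδn : δ ≤ δ * n := le_mul_of_one_le_right hδ0.le hn
    linarith
  have h6 : -(9 * δ * n) * W ^ 2 = -(ε / 2 * n) := by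
    rw [hδ]; field_simp; ring
  have h7 := mul_le_mul_of_nonneg_right hlow (sq_nonneg W)
  rw [h6] at h7
  have h8 : n * (D / W) ≤ n * (ε / 2) := by gcongr
  linarith

/-! ### From regularity to Cesàro convergence of the Jacobi coefficients -/

section regular
variable {μ : Measure ℝ} {p : ℕ → ℝ[X]} {κ : ℕ → ℝ}

lemma eval_recurrence_zero [IsFiniteMeasure μ] (hc : IsCompact (measSupport μ))
    (hON : OrthonormalPolysR μ p κ)
    (x : ℝ) : jacA κ 0 * (p 1).eval x = (x - jacB μ p 0) * (p 0).eval x := by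
  have h := congrArg (eval x) (recurrence_zero hc hON)
  simp only [eval_mul, eval_X, eval_add, eval_C] at h
  linarith

lemma eval_recurrence_succ [IsFiniteMeasure μ] (hc : IsCompact (measSupport μ))
    (hON : OrthonormalPolysR μ p κ)
    (x : ℝ) (n : ℕ) : jacA κ (n + 1) * (p (n + 2)).eval x =
      (x - jacB μ p (n + 1)) * (p (n + 1)).eval x - jacA κ n * (p n).eval x := by
  have h := congrArg (eval x) (recurrence_succ hc hON n)
  simp only [eval_mul, eval_X, eval_add, eval_C] at h
  linarith

lemma p_zero_eq (hON : OrthonormalPolysR μ p κ) : p 0 = C (κ 0) := by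
  have h := eq_C_of_degree_eq_zero (hON.1 0)
  rwa [hON.coeff_self] at h

lemma posRec_right [IsFiniteMeasure μ] (hc : IsCompact (measSupport μ))
    (hON : OrthonormalPolysR μ p κ) {R x : ℝ}
    (hR : ∀ x ∈ measSupport μ, |x| ≤ R) (hx : 3 * R ≤ x) :
    PosRec (jacA κ) (jacB μ p) (fun n => (p n).eval x) x R where
  a_pos := jacA_pos hON
  a_le := jacA_le hc hON hR
  β_le := abs_jacB_le hc hON hR
  q0 := by simpa [p_zero_eq hON] using hON.2.1 0
  r0 := eval_recurrence_zero hc hON x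
  rs := eval_recurrence_succ hc hON x
  hx := hx

lemma posRec_left [IsFiniteMeasure μ] (hc : IsCompact (measSupport μ))
    (hON : OrthonormalPolysR μ p κ) {R x : ℝ}
    (hR : ∀ x ∈ measSupport μ, |x| ≤ R) (hx : 3 * R ≤ x) :
    PosRec (jacA κ) (fun n => -jacB μ p n) (fun n => (-1) ^ n * (p n).eval (-x)) x R where
  a_pos := jacA_pos hON
  a_le := jacA_le hc hON hR
  β_le n := by rw [abs_neg]; exact abs_jacB_le hc hON hR n
  q0 := by simpa [p_zero_eq hON] using hON.2.1 0
  r0 := by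
    have h := eval_recurrence_zero hc hON (-x)
    linear_combination -h
  rs n := by
    have h := eval_recurrence_succ hc hON (-x) n
    simp only [pow_succ]
    linear_combination (-1) ^ n * h
  hx := hx

/-- Exponential growth of `|pₙ(x)|` itself: since `q` is nondecreasing, the `n + 1` terms of the
Christoffel–Darboux sum are dominated by the last one, so `christoffel_lower` bounds `q n` from
below. -/
lemma log_growth [IsFiniteMeasure μ] (hc : IsCompact (measSupport μ))
    (hess : {x : ℝ | AccPt x (𝓟 (measSupport μ))} = Set.Icc (-2) 2)
    (hON : OrthonormalPolysR μ p κ) {a β q : ℕ → ℝ} {x y Y R : ℝ} (h : PosRec a β q y R)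
    (hx : |x| = 2 * Real.cosh Y) (hxs : x ∉ measSupport μ)
    (hq : ∀ n, q n ^ 2 = (p n).eval x ^ 2) {δ : ℝ} (hδ : 0 < δ) :
    ∀ᶠ n : ℕ in atTop, (Y - δ) * n ≤ Real.log (q n) := by
  obtain ⟨c, hc0, N, hN⟩ := christoffel_lower hc hess hON (half_pos hδ) hx hxs
  have hlog : ∀ᶠ n : ℕ in atTop, Real.log ((n + 1 : ℕ) : ℝ) ≤ δ / 4 * ((n + 1 : ℕ) : ℝ) := by
    have h1 := (Real.isLittleO_log_id_atTop.bound (show 0 < δ / 4 by positivity))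
    have h2 := (tendsto_add_atTop_nat 1).eventually (tendsto_natCast_atTop_atTop.eventually h1)
    filter_upwards [h2] with n hn
    have h3 := (le_abs_self _).trans hn
    rwa [id, Real.norm_of_nonneg (by positivity)] at h3
  set K := δ / 4 - Real.log c - 2 * (Y - δ / 2) with hK
  filter_upwards [hlog, eventually_ge_atTop N,
    tendsto_natCast_atTop_atTop.eventually_ge_atTop (K / (δ / 4))] with n h1 h2 h3
  have hn : (0 : ℝ) ≤ n := Nat.cast_nonneg n
  rw [div_le_iff₀ (by positivity)] at h3
  have h4 := hN (n + 1) (by omega)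
  have h5 : ∑ j ∈ Finset.range (n + 1), (p j).eval x ^ 2 ≤ ((n + 1 : ℕ) : ℝ) * q n ^ 2 := by
    rw [← nsmul_eq_mul]
    have h6 := Finset.sum_le_card_nsmul (Finset.range (n + 1)) (fun j => (p j).eval x ^ 2)
      (q n ^ 2) (fun j hj => by
        rw [← hq]
        have h7 := h.mono (Nat.lt_succ_iff.1 (Finset.mem_range.1 hj))
        have h8 := (h.pos j).le
        gcongr)
    rwa [Finset.card_range] at h6
  have h6 := Real.log_le_log (by positivity) (h4.trans h5)
  have hqn := h.pos n
  rw [Real.log_mul hc0.ne' (Real.exp_pos _).ne', Real.log_exp,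
    Real.log_mul (by positivity) (by positivity), Real.log_pow] at h6
  push_cast at h6 h1
  have hδn := mul_nonneg hδ.le hn
  linarith

lemma log_kappa_small (hON : OrthonormalPolysR μ p κ)
    (hreg : Tendsto (fun n : ℕ => (κ n) ^ ((n : ℝ)⁻¹)) atTop (𝓝 1)) {δ : ℝ} (hδ : 0 < δ) :
    ∀ᶠ n : ℕ in atTop, |Real.log (κ n)| ≤ δ * n := by
  have h1 := ((Real.continuousAt_log one_ne_zero).tendsto.comp hreg).abs
  rw [Real.log_one, abs_zero] at h1
  filter_upwards [h1.eventually_le_const hδ, eventually_gt_atTop 0] with n hn hn0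
  rw [Function.comp, Real.log_rpow (hON.2.1 n), abs_mul, abs_of_nonneg (by positivity)] at hn
  have hn1 : (0 : ℝ) < n := by exact_mod_cast hn0
  rwa [inv_mul_le_iff₀ hn1, mul_comm] at hn

lemma sum_log_jacA (hON : OrthonormalPolysR μ p κ) (n : ℕ) :
    ∑ i ∈ Finset.range n, Real.log (jacA κ i) = Real.log (κ 0) - Real.log (κ n) := by
  rw [← Finset.sum_range_sub' (fun i => Real.log (κ i))]
  refine Finset.sum_congr rfl fun i _ => ?_
  rw [jacA, Real.log_div (hON.2.1 i).ne' (hON.2.1 _).ne']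

lemma sum_log_jacA_lower (hON : OrthonormalPolysR μ p κ)
    (hreg : Tendsto (fun n : ℕ => (κ n) ^ ((n : ℝ)⁻¹)) atTop (𝓝 1)) {δ : ℝ} (hδ : 0 < δ) :
    ∀ᶠ n : ℕ in atTop, -δ * n ≤ ∑ i ∈ Finset.range n, Real.log (jacA κ i) := by
  filter_upwards [log_kappa_small hON hreg (half_pos hδ),
    tendsto_natCast_atTop_atTop.eventually_ge_atTop (-Real.log (κ 0) / (δ / 2))] with n h1 h2
  rw [div_le_iff₀ (by positivity)] at h2
  rw [sum_log_jacA hON]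
  have := (abs_le.1 h1).2
  linarith

/-- The squared distance of the Jacobi coefficients `aₙ`, `bₙ₊₁` from the free ones `1`, `0`. -/
def jacDefect (μ : Measure ℝ) (p : ℕ → ℝ[X]) (κ : ℕ → ℝ) (n : ℕ) : ℝ :=
  jacB μ p (n + 1) ^ 2 + (jacA κ n - 1) ^ 2

/-- A regular measure with essential support `[-2, 2]` lies in the Cesàro–Nevai class: the defects
tend to zero in Cesàro mean. -/
lemma cesaro_nevai [IsFiniteMeasure μ] (hc : IsCompact (measSupport μ))
    (hess : {x : ℝ | AccPt x (𝓟 (measSupport μ))} = Set.Icc (-2) 2)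
    (hON : OrthonormalPolysR μ p κ)
    (hreg : Tendsto (fun n : ℕ => (κ n) ^ ((n : ℝ)⁻¹)) atTop (𝓝 1)) {ε : ℝ} (hε : 0 < ε) :
    ∀ᶠ n : ℕ in atTop, ∑ i ∈ Finset.range n, jacDefect μ p κ i ≤ ε * n := by
  obtain ⟨R₀, hR₀⟩ := hc.exists_bound_of_continuousOn (f := fun x : ℝ => x) continuousOn_id
  set R := max R₀ 1 with hRdef
  have hR : ∀ x ∈ measSupport μ, |x| ≤ R := fun x hx => (hR₀ x hx).trans (le_max_left _ _)
  have hR1 : 1 ≤ R := le_max_right _ _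
  have hlim : Tendsto (fun Y => 2 * Real.cosh Y) atTop atTop := by
    refine tendsto_atTop_mono (fun Y => ?_) Real.tendsto_exp_atTop
    have := exp_div_two_le_cosh Y
    linarith
  have hup := cesaro_upper (a := jacA κ) (b := jacB μ p) (R := R)
    (fun δ hδ => sum_log_jacA_lower hON hreg hδ)
    (by
      filter_upwards [hlim.eventually_ge_atTop (3 * R)] with Y hY
      have hpos : 0 < 2 * Real.cosh Y := by linarith
      have h1 := posRec_right hc hON hR hY
      have h2 := posRec_left hc hON hR hY
      refine ⟨_, _, h1, h2, fun δ hδ => ?_, fun δ hδ => ?_⟩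
      · refine log_growth hc hess hON h1 (abs_of_pos hpos) (fun hmem => ?_) (fun n => rfl) hδ
        have := hR _ hmem
        rw [abs_of_pos hpos] at this
        linarith
      · refine log_growth hc hess hON h2 (x := -(2 * Real.cosh Y))
          (by rw [abs_neg, abs_of_pos hpos]) (fun hmem => ?_) (fun n => ?_) hδ
        · have := hR _ hmem
          rw [abs_neg, abs_of_pos hpos] at this
          linarith
        · rw [mul_pow, ← pow_mul, mul_comm n 2, pow_mul]
          simp) (half_pos hε)
  filter_upwards [hup, sum_log_jacA_lower hON hreg (show 0 < ε / 8 by positivity)] with n h1 h2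
  have h3 : ∑ i ∈ Finset.range n, jacDefect μ p κ i ≤
      ∑ i ∈ Finset.range n, ((2 * jacA κ i ^ 2 + jacB μ p (i + 1) ^ 2 - 2)
        - 4 * Real.log (jacA κ i)) := by
    refine Finset.sum_le_sum fun i _ => ?_
    have := Real.log_le_sub_one_of_pos (jacA_pos hON i)
    rw [jacDefect]
    nlinarith [sq_nonneg (jacA κ i - 1)]
  rw [Finset.sum_sub_distrib, ← Finset.mul_sum] at h3
  linarith

end regular

/-! ### Density-one sets -/

/-- A nonnegative sequence with vanishing Cesàro means tends to zero along a set of density one. -/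
lemma exists_density_one_tendsto {e : ℕ → ℝ} (he : ∀ n, 0 ≤ e n)
    (hces : ∀ ε > 0, ∀ᶠ n : ℕ in atTop, ∑ i ∈ Finset.range (n + 1), e i ≤ ε * n) :
    ∃ 𝒩 : Set ℕ, hasDensityOne 𝒩 ∧ Tendsto e (atTop ⊓ 𝓟 𝒩) (𝓝 0) := by
  classical
  set A : ℕ → ℝ := fun n => (∑ i ∈ Finset.range (n + 1), e i) / n with hA
  have hA0 : ∀ n, 0 ≤ A n := fun n =>
    div_nonneg (Finset.sum_nonneg fun i _ => he i) (Nat.cast_nonneg n)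
  have hAle : ∀ ε > 0, ∀ᶠ n : ℕ in atTop, A n ≤ ε := by
    intro ε hε
    filter_upwards [hces ε hε, eventually_gt_atTop 0] with n hn hn0
    rw [hA, div_le_iff₀ (by exact_mod_cast hn0)]
    exact hn
  have hAlim : Tendsto A atTop (𝓝 0) := by
    rw [Metric.tendsto_atTop']
    intro ε hε
    obtain ⟨N, hN⟩ := eventually_atTop.1 (hAle (ε / 2) (half_pos hε))
    refine ⟨N, fun n hn => ?_⟩
    rw [Real.dist_eq, sub_zero, abs_of_nonneg (hA0 n)]
    linarith [hN n hn.le]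
  have hbdd : ∀ n, BddAbove (Set.range fun k => A (n + k)) := fun n =>
    hAlim.bddAbove_range.mono (by rintro _ ⟨k, rfl⟩; exact ⟨n + k, rfl⟩)
  -- a positive antitone null sequence dominating `A`
  set M : ℕ → ℝ := fun n => (⨆ k, A (n + k)) + 1 / ((n : ℝ) + 1) with hM
  have hAM : ∀ n, A n ≤ ⨆ k, A (n + k) := fun n => le_ciSup (hbdd n) 0
  have hAM' : ∀ n, A n ≤ M n := fun n => (hAM n).trans (by
    rw [hM]; exact le_add_of_nonneg_right (by positivity))
  have hMpos : ∀ n, 0 < M n := fun n =>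
    add_pos_of_nonneg_of_pos ((hA0 n).trans (hAM n)) (by positivity)
  have hManti : Antitone M := by
    intro m n hmn
    refine add_le_add (ciSup_le fun k => ?_) (by gcongr)
    have h := le_ciSup (hbdd m) (n - m + k)
    rwa [show m + (n - m + k) = n + k by omega] at h
  have hMlim : Tendsto M atTop (𝓝 0) := by
    rw [← add_zero (0 : ℝ)]
    refine Tendsto.add ?_ tendsto_one_div_add_atTop_nhds_zero_nat
    rw [Metric.tendsto_atTop']
    intro ε hε
    obtain ⟨N, hN⟩ := eventually_atTop.1 (hAle (ε / 2) (half_pos hε))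
    refine ⟨N, fun n hn => ?_⟩
    rw [Real.dist_eq, sub_zero, abs_of_nonneg ((hA0 n).trans (hAM n))]
    have : (⨆ k, A (n + k)) ≤ ε / 2 := ciSup_le fun k => hN _ (by omega)
    linarith
  have hsq : Tendsto (fun n => √(M n)) atTop (𝓝 0) := by
    simpa using hMlim.sqrt
  refine ⟨{n | e n ≤ √(M n)}, ?_, ?_⟩
  · have hlow : ∀ᶠ n : ℕ in atTop, 1 - √(M n) ≤
        (Nat.card ↥({n | e n ≤ √(M n)} ∩ Set.Icc 1 n) : ℝ) / n := by
      filter_upwards [eventually_gt_atTop 0] with n hn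
      have hn' : (0 : ℝ) < n := by exact_mod_cast hn
      have hset : {n | e n ≤ √(M n)} ∩ Set.Icc 1 n =
          ↑((Finset.Icc 1 n).filter fun m => e m ≤ √(M m)) := by
        ext m; simp [and_comm]
      rw [hset, Nat.card_coe_set_eq, Set.ncard_coe_finset, le_div_iff₀ hn']
      have hsum := Finset.card_filter_add_card_filter_not (s := Finset.Icc 1 n)
        (fun m => e m ≤ √(M m))
      rw [Nat.card_Icc, Nat.add_sub_cancel] at hsum
      set G := (Finset.Icc 1 n).filter fun m => e m ≤ √(M m)
      set Bd := (Finset.Icc 1 n).filter fun m => ¬ e m ≤ √(M m) with hBd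
      have hS : (0 : ℝ) < √(M n) := Real.sqrt_pos.2 (hMpos n)
      have h1 : (Bd.card : ℝ) * √(M n) ≤ ∑ i ∈ Finset.range (n + 1), e i := by
        rw [← nsmul_eq_mul]
        refine (Finset.card_nsmul_le_sum Bd e _ fun m hm => ?_).trans
          (Finset.sum_le_sum_of_subset_of_nonneg ?_ fun i _ _ => he i)
        · rw [hBd, Finset.mem_filter, Finset.mem_Icc, not_le] at hm
          exact (Real.sqrt_le_sqrt (hManti hm.1.2)).trans hm.2.le
        · intro m hm
          rw [hBd, Finset.mem_filter, Finset.mem_Icc] at hm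
          exact Finset.mem_range.2 (by omega)
      have h2 : ∑ i ∈ Finset.range (n + 1), e i ≤ n * √(M n) * √(M n) := by
        rw [mul_assoc, Real.mul_self_sqrt (hMpos n).le, mul_comm]
        exact (div_le_iff₀ hn').1 (hAM' n)
      have h3 : (Bd.card : ℝ) ≤ n * √(M n) := le_of_mul_le_mul_right (h1.trans h2) hS
      have h4 : (G.card : ℝ) + Bd.card = n := by exact_mod_cast hsum
      linarith
    have hup : ∀ᶠ n : ℕ in atTop,
        (Nat.card ↥({n | e n ≤ √(M n)} ∩ Set.Icc 1 n) : ℝ) / n ≤ 1 := by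
      filter_upwards [eventually_gt_atTop 0] with n hn
      rw [div_le_one (by exact_mod_cast hn), Nat.card_coe_set_eq]
      have := Set.ncard_le_ncard (s := {n | e n ≤ √(M n)} ∩ Set.Icc 1 n) Set.inter_subset_right
        (Set.finite_Icc 1 n)
      rw [← Finset.coe_Icc, Set.ncard_coe_finset, Nat.card_Icc, Nat.add_sub_cancel] at this
      exact_mod_cast this
    refine tendsto_of_tendsto_of_tendsto_of_le_of_le' ?_ tendsto_const_nhds hlow hup
    simpa using hsq.const_sub 1
  · refine tendsto_of_tendsto_of_tendsto_of_le_of_le' tendsto_const_nhds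
      (hsq.mono_left inf_le_left) (Eventually.of_forall he) ?_
    exact mem_inf_of_right (mem_principal_self _)

/-- Exponentially weighted sums `∑_{k ≤ n} 2⁻ᵏ D (n - k)`, which control all the shifts of `D`. -/
def expSmooth (D : ℕ → ℝ) : ℕ → ℝ
  | 0 => D 0
  | n + 1 => D (n + 1) + expSmooth D n / 2

/-- One set of density one serves all shifts at once, because `D (n - k) ≤ 2ᵏ expSmooth D n`. -/
lemma exists_density_one_tendsto_shifts {D : ℕ → ℝ} (hD : ∀ n, 0 ≤ D n)
    (hces : ∀ ε > 0, ∀ᶠ n : ℕ in atTop, ∑ i ∈ Finset.range n, D i ≤ ε * n) :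
    ∃ 𝒩 : Set ℕ, hasDensityOne 𝒩 ∧
      ∀ k, Tendsto (fun n => D (n - k)) (atTop ⊓ 𝓟 𝒩) (𝓝 0) := by
  have he : ∀ n, 0 ≤ expSmooth D n := by
    intro n
    induction n with
    | zero => exact hD 0
    | succ n ih => exact add_nonneg (hD _) (by linarith)
  have hDe : ∀ n, D n ≤ expSmooth D n := by
    intro n
    cases n with
    | zero => exact le_rfl
    | succ n => exact le_add_of_nonneg_right (by linarith [he n])
  have hsum : ∀ n, ∑ i ∈ Finset.range (n + 1), expSmooth D i + expSmooth D n =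
      2 * ∑ i ∈ Finset.range (n + 1), D i := by
    intro n
    induction n with
    | zero => simp [expSmooth]; ring
    | succ n ih =>
      rw [Finset.sum_range_succ, Finset.sum_range_succ D (n + 1), mul_add, ← ih, expSmooth]
      ring
  have hshift : ∀ k n, expSmooth D (n - k) ≤ 2 ^ k * expSmooth D n := by
    intro k
    induction k with
    | zero => intro n; simp
    | succ k ih =>
      intro n
      have h1 : expSmooth D (n - (k + 1)) ≤ 2 * expSmooth D (n - k) := by
        rcases h : n - k with _ | m
        · rw [show n - (k + 1) = 0 by omega]
          linarith [he 0]
        · rw [show n - (k + 1) = m by omega, expSmooth]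
          linarith [hD (m + 1)]
      rw [pow_succ]
      linarith [ih n]
  obtain ⟨𝒩, hN, hlim⟩ := exists_density_one_tendsto he (by
    intro ε hε
    filter_upwards [(tendsto_add_atTop_nat 1).eventually (hces (ε / 4) (by positivity)),
      eventually_ge_atTop 1] with n hn hn1
    have h1 : (1 : ℝ) ≤ n := by exact_mod_cast hn1
    push_cast at hn
    have h2 : ε / 4 * 1 ≤ ε / 4 * n := by gcongr
    linarith [hsum n, he n])
  refine ⟨𝒩, hN, fun k => ?_⟩
  refine squeeze_zero (fun n => hD _) (fun n => (hDe _).trans (hshift k n)) ?_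
  simpa using hlim.const_mul (2 ^ k)

/-! ### Ratio asymptotics off the support -/

section ratio
variable {μ : Measure ℝ} {p : ℕ → ℝ[X]} {κ : ℕ → ℝ}

lemma aeval_recurrence_zero [IsFiniteMeasure μ] (hc : IsCompact (measSupport μ))
    (hON : OrthonormalPolysR μ p κ) (z : ℂ) :
    (jacA κ 0 : ℂ) * aeval z (p 1) = (z - (jacB μ p 0 : ℂ)) * aeval z (p 0) := by
  have h := congrArg (aeval z) (recurrence_zero hc hON)
  simp only [map_mul, aeval_X, map_add, aeval_C, Complex.coe_algebraMap] at h
  linear_combination -h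

lemma aeval_recurrence_succ [IsFiniteMeasure μ] (hc : IsCompact (measSupport μ))
    (hON : OrthonormalPolysR μ p κ) (z : ℂ) (n : ℕ) :
    (jacA κ (n + 1) : ℂ) * aeval z (p (n + 2)) =
      (z - (jacB μ p (n + 1) : ℂ)) * aeval z (p (n + 1)) - (jacA κ n : ℂ) * aeval z (p n) := by
  have h := congrArg (aeval z) (recurrence_succ hc hON n)
  simp only [map_mul, aeval_X, map_add, aeval_C, Complex.coe_algebraMap] at h
  linear_combination -h

/-- The Christoffel–Darboux identity. -/
lemma christoffel_darboux [IsFiniteMeasure μ] (hc : IsCompact (measSupport μ))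
    (hON : OrthonormalPolysR μ p κ) (z : ℂ) (x : ℝ) (n : ℕ) :
    (x - z) * ∑ j ∈ Finset.range (n + 1), aeval z (p j) * (((p j).eval x : ℝ) : ℂ) =
      (jacA κ n : ℂ) * (aeval z (p n) * (((p (n + 1)).eval x : ℝ) : ℂ)
        - aeval z (p (n + 1)) * (((p n).eval x : ℝ) : ℂ)) := by
  induction n with
  | zero =>
    have h1 := aeval_recurrence_zero hc hON z
    have h2 : (jacA κ 0 : ℂ) * (((p 1).eval x : ℝ) : ℂ) =
        (x - (jacB μ p 0 : ℂ)) * (((p 0).eval x : ℝ) : ℂ) := by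
      exact_mod_cast congrArg Complex.ofReal (eval_recurrence_zero hc hON x)
    rw [Finset.sum_range_one]
    linear_combination (((p 0).eval x : ℝ) : ℂ) * h1 - aeval z (p 0) * h2
  | succ n ih =>
    have h1 := aeval_recurrence_succ hc hON z n
    have h2 : (jacA κ (n + 1) : ℂ) * (((p (n + 2)).eval x : ℝ) : ℂ) =
        (x - (jacB μ p (n + 1) : ℂ)) * (((p (n + 1)).eval x : ℝ) : ℂ)
          - (jacA κ n : ℂ) * (((p n).eval x : ℝ) : ℂ) := by
      exact_mod_cast congrArg Complex.ofReal (eval_recurrence_succ hc hON x n)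
    rw [Finset.sum_range_succ, mul_add, ih]
    linear_combination (((p (n + 1)).eval x : ℝ) : ℂ) * h1 - aeval z (p (n + 1)) * h2

/-- Parseval's identity for finite complex combinations of the orthonormal polynomials. -/
lemma integral_normSq_sum [IsFiniteMeasure μ] (hc : IsCompact (measSupport μ))
    (hON : OrthonormalPolysR μ p κ) (n : ℕ) (c : ℕ → ℂ) :
    Integrable (fun x => ‖∑ j ∈ Finset.range n, c j * (((p j).eval x : ℝ) : ℂ)‖ ^ 2) μ ∧
    ∫ x, ‖∑ j ∈ Finset.range n, c j * (((p j).eval x : ℝ) : ℂ)‖ ^ 2 ∂μ =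
      ∑ j ∈ Finset.range n, ‖c j‖ ^ 2 := by
  set f : ℝ[X] := ∑ j ∈ Finset.range n, C (c j).re * p j with hf
  set g : ℝ[X] := ∑ j ∈ Finset.range n, C (c j).im * p j with hg
  have h1 : (fun x : ℝ => ‖∑ j ∈ Finset.range n, c j * (((p j).eval x : ℝ) : ℂ)‖ ^ 2) =
      fun x => f.eval x * f.eval x + g.eval x * g.eval x := by
    ext x
    rw [← Complex.normSq_eq_norm_sq, Complex.normSq_apply]
    simp [hf, hg, eval_finsetSum]
  rw [h1]
  refine ⟨(integrable_poly_mul hc f f).add (integrable_poly_mul hc g g), ?_⟩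
  rw [integral_add (integrable_poly_mul hc f f) (integrable_poly_mul hc g g)]
  have h2 := polyInner_expansion_self hc hON n (fun j => (c j).re)
  have h3 := polyInner_expansion_self hc hON n (fun j => (c j).im)
  rw [polyInner] at h2 h3
  rw [h2, h3, ← Finset.sum_add_distrib]
  refine Finset.sum_congr rfl fun j _ => ?_
  rw [← Complex.normSq_eq_norm_sq, Complex.normSq_apply]
  ring

/-- The Christoffel–Darboux diagonal sum at a point `z` off the support is controlled by two
consecutive polynomials: the function `Kₙ(·, z)` is an approximate eigenvector of multiplication
by `x`, and `z` has positive distance from the support. -/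
lemma sum_normSq_le [IsFiniteMeasure μ] (hc : IsCompact (measSupport μ))
    (hON : OrthonormalPolysR μ p κ) {z : ℂ} {d : ℝ} (hd : 0 < d)
    (hz : ∀ x ∈ measSupport μ, d ≤ ‖(x : ℂ) - z‖) (n : ℕ) :
    d ^ 2 * ∑ j ∈ Finset.range (n + 1), ‖aeval z (p j)‖ ^ 2 ≤
      jacA κ n ^ 2 * (‖aeval z (p n)‖ ^ 2 + ‖aeval z (p (n + 1))‖ ^ 2) := by
  obtain ⟨i1, e1⟩ := integral_normSq_sum hc hON (n + 1) (fun j => aeval z (p j))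
  set c : ℕ → ℂ := fun j => if j = n + 1 then aeval z (p n) else
    if j = n then -aeval z (p (n + 1)) else 0 with hcdef
  obtain ⟨i2, e2⟩ := integral_normSq_sum hc hON (n + 2) c
  have hc0 : ∀ j ∈ Finset.range n, c j = 0 := fun j hj => by
    have := Finset.mem_range.1 hj
    rw [hcdef]
    simp only
    rw [if_neg (by omega), if_neg (by omega)]
  have hcn : c n = -aeval z (p (n + 1)) := by simp [hcdef]
  have hcn1 : c (n + 1) = aeval z (p n) := by simp [hcdef]
  have hs : ∑ j ∈ Finset.range (n + 2), ‖c j‖ ^ 2 =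
      ‖aeval z (p n)‖ ^ 2 + ‖aeval z (p (n + 1))‖ ^ 2 := by
    rw [Finset.sum_range_succ, Finset.sum_range_succ, Finset.sum_eq_zero, hcn, hcn1, norm_neg]
    · ring
    · intro j hj; simp [hc0 j hj]
  rw [← e1, ← hs, ← e2, ← integral_const_mul, ← integral_const_mul]
  refine integral_mono_ae (i1.const_mul _) (i2.const_mul _) ?_
  filter_upwards [ae_mem_measSupport μ] with x hx
  have hsum : ∑ j ∈ Finset.range (n + 2), c j * (((p j).eval x : ℝ) : ℂ) =
      aeval z (p n) * (((p (n + 1)).eval x : ℝ) : ℂ)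
        - aeval z (p (n + 1)) * (((p n).eval x : ℝ) : ℂ) := by
    rw [Finset.sum_range_succ, Finset.sum_range_succ, Finset.sum_eq_zero, hcn, hcn1]
    · ring
    · intro j hj; simp [hc0 j hj]
  have h := congrArg (fun w : ℂ => ‖w‖ ^ 2) (christoffel_darboux hc hON z x n)
  simp only [norm_mul, mul_pow, Complex.norm_real, Real.norm_eq_abs, sq_abs] at h
  rw [hsum, ← h]
  have := hz x hx
  gcongr

/-- A perturbed contraction `θₙ₊₁ ≤ σ θₙ + gₙ` tends to zero along any filter along which every
shift of `g` does. -/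
lemma contraction_tendsto {l : Filter ℕ} (hl : l ≤ atTop) {θ g : ℕ → ℝ} {σ T : ℝ}
    (hσ0 : 0 ≤ σ) (hσ : σ < 1) (hθ0 : ∀ n, 0 ≤ θ n) (hθT : ∀ n, θ n ≤ T)
    (hrec : ∀ n, θ (n + 1) ≤ σ * θ n + g n)
    (hg : ∀ k, Tendsto (fun n => g (n - k)) l (𝓝 0)) (j : ℕ) :
    Tendsto (fun n => θ (n - j)) l (𝓝 0) := by
  have key : ∀ k : ℕ, ∀ ε > 0, ∀ j : ℕ, ∀ᶠ n in l, θ (n - j) ≤ σ ^ k * T + ε := by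
    intro k
    induction k with
    | zero =>
      intro ε hε j
      filter_upwards with n
      have := hθT (n - j)
      rw [pow_zero]
      linarith
    | succ k ih =>
      intro ε hε j
      filter_upwards [ih (ε / 2) (half_pos hε) (j + 1),
        (hg (j + 1)).eventually_le_const (half_pos hε), hl (eventually_gt_atTop j)]
        with n h1 h2 h3
      have h4 := hrec (n - (j + 1))
      rw [show n - (j + 1) + 1 = n - j by omega] at h4
      have h5 : σ * θ (n - (j + 1)) ≤ σ * (σ ^ k * T + ε / 2) := by gcongr
      have h6 : σ * (ε / 2) ≤ 1 * (ε / 2) := by gcongr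
      rw [pow_succ]
      linarith
  refine tendsto_order.2 ⟨fun a ha => ?_, fun a ha => ?_⟩
  · exact Eventually.of_forall fun n => ha.trans_le (hθ0 _)
  · have h1 : Tendsto (fun k : ℕ => σ ^ k * T) atTop (𝓝 0) := by
      simpa using (tendsto_pow_atTop_nhds_zero_of_lt_one hσ0 hσ).mul_const T
    obtain ⟨k, hk⟩ := (h1.eventually_lt_const (half_pos ha)).exists
    filter_upwards [key k (a / 2) (half_pos ha) j] with n hn
    linarith

/-- A bound `θₙ` for the relative error in `aₙ pₙ₊₁(z) ≈ w pₙ(z)`, defined by its recursion; here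
`σ = |w|⁻¹`. -/
def ratioError (θ₀ σ : ℝ) (g : ℕ → ℝ) : ℕ → ℝ
  | 0 => θ₀
  | n + 1 => σ * ratioError θ₀ σ g n + g n

/-- The function `aₙ pₙ₊₁ - w pₙ` satisfies a contractive first-order recursion, whose forcing
term is controlled by the distance of the Jacobi coefficients from the free ones. -/
lemma norm_sub_le_ratioError [IsFiniteMeasure μ] (hc : IsCompact (measSupport μ))
    (hON : OrthonormalPolysR μ p κ) {w z : ℂ} (hw : 1 < ‖w‖) (hwz : w + w⁻¹ = z) (n : ℕ) :
    ‖(jacA κ n : ℂ) * aeval z (p (n + 1)) - w * aeval z (p n)‖ ≤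
      ratioError (1 + |jacB μ p 0|) ‖w‖⁻¹
        (fun i => |jacB μ p (i + 1)| + 2 * |jacA κ i - 1|) n *
      √(∑ j ∈ Finset.range (n + 1), ‖aeval z (p j)‖ ^ 2) := by
  have hw0 : w ≠ 0 := by
    rintro rfl
    norm_num at hw
  have hσ : ‖w‖⁻¹ ≤ 1 := inv_le_one_of_one_le₀ hw.le
  have hww : w * w⁻¹ = 1 := mul_inv_cancel₀ hw0
  set g : ℕ → ℝ := fun i => |jacB μ p (i + 1)| + 2 * |jacA κ i - 1| with hg
  set k : ℕ → ℝ := fun n => √(∑ j ∈ Finset.range (n + 1), ‖aeval z (p j)‖ ^ 2) with hk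
  have hle : ∀ {i n : ℕ}, i ≤ n → ‖aeval z (p i)‖ ≤ k n := fun {i n} hin =>
    Real.le_sqrt_of_sq_le (Finset.single_le_sum (f := fun j => ‖aeval z (p j)‖ ^ 2)
      (fun j _ => sq_nonneg _) (Finset.mem_range.2 (Nat.lt_succ_of_le hin)))
  have hkmono : ∀ n, k n ≤ k (n + 1) := fun n => by
    refine Real.sqrt_le_sqrt ?_
    rw [Finset.sum_range_succ _ (n + 1)]
    exact le_add_of_nonneg_right (sq_nonneg _)
  have hθ0 : ∀ n, 0 ≤ ratioError (1 + |jacB μ p 0|) ‖w‖⁻¹ g n := by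
    intro n
    induction n with
    | zero => exact add_nonneg zero_le_one (abs_nonneg _)
    | succ n ih => rw [ratioError]; positivity
  change _ ≤ _ * k n
  induction n with
  | zero =>
    have h1 : (jacA κ 0 : ℂ) * aeval z (p 1) - w * aeval z (p 0) =
        (w⁻¹ - (jacB μ p 0 : ℂ)) * aeval z (p 0) := by
      rw [aeval_recurrence_zero hc hON, ← hwz]; ring
    rw [zero_add, h1, norm_mul, ratioError]
    refine mul_le_mul ?_ (hle le_rfl) (norm_nonneg _) (by positivity)
    refine (norm_sub_le _ _).trans ?_
    rw [norm_inv, Complex.norm_real, Real.norm_eq_abs]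
    gcongr
  | succ n ih =>
    have h1 : (jacA κ (n + 1) : ℂ) * aeval z (p (n + 2)) - w * aeval z (p (n + 1)) =
        w⁻¹ * ((jacA κ n : ℂ) * aeval z (p (n + 1)) - w * aeval z (p n))
        + ((-w⁻¹ * ((jacA κ n - 1 : ℝ) : ℂ) - (jacB μ p (n + 1) : ℂ)) * aeval z (p (n + 1))
          - ((jacA κ n - 1 : ℝ) : ℂ) * aeval z (p n)) := by
      rw [aeval_recurrence_succ hc hON]
      push_cast
      linear_combination aeval z (p n) * hww - aeval z (p (n + 1)) * hwz
    rw [h1]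
    have h2 : ‖w⁻¹ * ((jacA κ n : ℂ) * aeval z (p (n + 1)) - w * aeval z (p n))‖ ≤
        ‖w‖⁻¹ * ratioError (1 + |jacB μ p 0|) ‖w‖⁻¹ g n * k (n + 1) := by
      rw [norm_mul, norm_inv, mul_assoc]
      have := hθ0 n
      exact mul_le_mul_of_nonneg_left (ih.trans (by gcongr; exact hkmono n)) (by positivity)
    have h3 : ‖(-w⁻¹ * ((jacA κ n - 1 : ℝ) : ℂ) - (jacB μ p (n + 1) : ℂ)) * aeval z (p (n + 1))‖
        ≤ (|jacA κ n - 1| + |jacB μ p (n + 1)|) * k (n + 1) := by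
      rw [norm_mul]
      refine mul_le_mul ?_ (hle le_rfl) (norm_nonneg _) (by positivity)
      refine (norm_sub_le _ _).trans ?_
      rw [norm_mul, norm_neg, norm_inv, Complex.norm_real, Complex.norm_real, Real.norm_eq_abs,
        Real.norm_eq_abs]
      gcongr
      exact mul_le_of_le_one_left (abs_nonneg _) hσ
    have h4 : ‖((jacA κ n - 1 : ℝ) : ℂ) * aeval z (p n)‖ ≤ |jacA κ n - 1| * k (n + 1) := by
      rw [norm_mul, Complex.norm_real, Real.norm_eq_abs]
      gcongr
      exact hle (Nat.le_succ n)
    have h5 := (norm_add_le _ _).trans (add_le_add h2 ((norm_sub_le _ _).trans (add_le_add h3 h4)))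
    refine h5.trans (le_of_eq ?_)
    rw [ratioError, hg]
    ring

end ratio

theorem real_ratio_asymptotics_along_density_one
    (μ : Measure ℝ) [IsFiniteMeasure μ]
    (hc : IsCompact (measSupport μ)) (hi : (measSupport μ).Infinite)
    (hess : {x : ℝ | AccPt x (𝓟 (measSupport μ))} = Set.Icc (-2) 2)
    (p : ℕ → Polynomial ℝ) (κ : ℕ → ℝ) (hON : OrthonormalPolysR μ p κ)
    (hreg : Tendsto (fun n : ℕ => (κ n) ^ ((n : ℝ)⁻¹)) atTop (𝓝 1)) :
    ∃ 𝒩 : Set ℕ, hasDensityOne 𝒩 ∧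
      ∀ z : ℂ, z ∉ Complex.ofReal '' measSupport μ →
        ∀ w : ℂ, 1 < ‖w‖ → w + w⁻¹ = z →
          Tendsto
            (fun n => w * Polynomial.aeval z (p (n - 1)) / Polynomial.aeval z (p n))
            (atTop ⊓ 𝓟 𝒩) (𝓝 1) := by
  obtain ⟨𝒩, hN, hD⟩ := exists_density_one_tendsto_shifts (D := jacDefect μ p κ)
    (fun n => add_nonneg (sq_nonneg _) (sq_nonneg _))
    (fun ε hε => cesaro_nevai hc hess hON hreg hε)
  refine ⟨𝒩, hN, fun z hz w hw hwz => ?_⟩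
  set l : Filter ℕ := atTop ⊓ 𝓟 𝒩 with hl
  have hl' : l ≤ atTop := inf_le_left
  obtain ⟨R, hR'⟩ := hc.exists_bound_of_continuousOn (f := fun x : ℝ => x) continuousOn_id
  have hR : ∀ x ∈ measSupport μ, |x| ≤ R := hR'
  have hR0 : 0 < R := (jacA_pos hON 0).trans_le (jacA_le hc hON hR 0)
  obtain ⟨d, hd, hdz⟩ : ∃ d > 0, ∀ x ∈ measSupport μ, d ≤ ‖(x : ℂ) - z‖ := by
    have hopen : IsOpen (Complex.ofReal '' measSupport μ)ᶜ :=
      (hc.image Complex.continuous_ofReal).isClosed.isOpen_compl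
    obtain ⟨d, hd, hball⟩ := Metric.isOpen_iff.1 hopen z hz
    refine ⟨d, hd, fun x hx => ?_⟩
    by_contra! hlt
    exact hball (by rwa [Metric.mem_ball, dist_eq_norm]) ⟨x, hx, rfl⟩
  -- the deviations of the individual coefficients vanish along all shifts of `𝒩`
  have hsqrt : ∀ k, Tendsto (fun n => √(jacDefect μ p κ (n - k))) l (𝓝 0) := fun k => by
    simpa using (hD k).sqrt
  have hbD : ∀ n, |jacB μ p (n + 1)| ≤ √(jacDefect μ p κ n) := fun n =>
    Real.abs_le_sqrt (le_add_of_nonneg_right (sq_nonneg _))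
  have haD : ∀ n, |jacA κ n - 1| ≤ √(jacDefect μ p κ n) := fun n =>
    Real.abs_le_sqrt (le_add_of_nonneg_left (sq_nonneg _))
  set g : ℕ → ℝ := fun i => |jacB μ p (i + 1)| + 2 * |jacA κ i - 1| with hg
  have hg0 : ∀ n, 0 ≤ g n := fun n => by positivity
  have hglim : ∀ k, Tendsto (fun n => g (n - k)) l (𝓝 0) := by
    intro k
    refine squeeze_zero (fun n => hg0 _) (g := fun n => 3 * √(jacDefect μ p κ (n - k))) ?_ ?_
    · intro n
      have h1 := hbD (n - k)
      have h2 := haD (n - k)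
      rw [hg]
      simp only
      linarith
    · simpa using (hsqrt k).const_mul 3
  set σ := ‖w‖⁻¹ with hσ
  have hσ0 : 0 ≤ σ := by positivity
  have hσ1 : σ < 1 := inv_lt_one_of_one_lt₀ hw
  set θ := ratioError (1 + |jacB μ p 0|) σ g with hθ
  have hθ0 : ∀ n, 0 ≤ θ n := by
    intro n
    induction n with
    | zero => exact add_nonneg zero_le_one (abs_nonneg _)
    | succ n ih => exact add_nonneg (mul_nonneg hσ0 ih) (hg0 n)
  have hgT : ∀ n, g n ≤ 3 * R + 2 := fun n => by
    have h1 := abs_jacB_le hc hON hR (n + 1)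
    have h2 : |jacA κ n - 1| ≤ R + 1 := by
      rw [abs_le]
      constructor <;> linarith [jacA_pos hON n, jacA_le hc hON hR n]
    rw [hg]
    simp only
    linarith
  -- `T` is the fixed point of `t ↦ σ t + (3R + 2)`
  set T := (3 * R + 2) / (1 - σ) with hT
  have hT1 : 3 * R + 2 = T * (1 - σ) := by
    rw [hT, div_mul_cancel₀ _ (by linarith)]
  have hTge : 3 * R + 2 ≤ T := by
    rw [hT, le_div_iff₀ (by linarith)]
    exact mul_le_of_le_one_right (by positivity) (by linarith)
  have hθT : ∀ n, θ n ≤ T := by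
    intro n
    induction n with
    | zero =>
      have h1 := abs_jacB_le hc hON hR 0
      change 1 + |jacB μ p 0| ≤ T
      linarith
    | succ n ih =>
      change σ * θ n + g n ≤ T
      have h1 : σ * θ n ≤ σ * T := by gcongr
      have h2 := hgT n
      linarith
  have hθlim : Tendsto (fun n => θ (n - 1)) l (𝓝 0) :=
    contraction_tendsto hl' hσ0 hσ1 hθ0 hθT (fun n => le_rfl) hglim 1
  have halim : Tendsto (fun n => jacA κ (n - 1)) l (𝓝 1) := by
    rw [tendsto_iff_norm_sub_tendsto_zero]
    exact squeeze_zero (fun n => norm_nonneg _) (fun n => haD (n - 1)) (hsqrt 1)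
  set B := R / d with hB
  have hB0 : 0 < B := by positivity
  have hK : ∀ m, √(∑ j ∈ Finset.range (m + 1), ‖aeval z (p j)‖ ^ 2) ≤
      B * (‖aeval z (p m)‖ + ‖aeval z (p (m + 1))‖) := by
    intro m
    rw [Real.sqrt_le_left (by positivity)]
    have h1 := sum_normSq_le hc hON hd hdz m
    have h2 : jacA κ m ^ 2 ≤ R ^ 2 := by
      have := (jacA_pos hON m).le
      gcongr
      exact jacA_le hc hON hR m
    have h3 : ‖aeval z (p m)‖ ^ 2 + ‖aeval z (p (m + 1))‖ ^ 2 ≤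
        (‖aeval z (p m)‖ + ‖aeval z (p (m + 1))‖) ^ 2 := by
      nlinarith [norm_nonneg (aeval z (p m)), norm_nonneg (aeval z (p (m + 1)))]
    rw [hB, mul_pow, div_pow, div_mul_eq_mul_div, le_div_iff₀ (by positivity), mul_comm]
    exact h1.trans (by gcongr)
  have hp0 : aeval z (p 0) ≠ 0 := by
    rw [p_zero_eq hON, aeval_C, Complex.coe_algebraMap]
    exact_mod_cast (hON.2.1 0).ne'
  have hmain : ∀ᶠ n in l, ‖w * aeval z (p (n - 1)) / aeval z (p n) - jacA κ (n - 1)‖ ≤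
      5 * B * θ (n - 1) := by
    filter_upwards [hθlim.eventually_le_const (show 0 < 1 / (2 * B) by positivity),
      halim.eventually_le_const (show (1 : ℝ) < 3 / 2 by norm_num),
      hl' (eventually_gt_atTop 0)] with n h1 h2 h3
    obtain ⟨m, rfl⟩ : ∃ m, n = m + 1 := ⟨n - 1, by omega⟩
    rw [Nat.add_sub_cancel] at h1 h2 ⊢
    have h4 := norm_sub_le_ratioError hc hON hw hwz m
    have h5 : ‖(jacA κ m : ℂ) * aeval z (p (m + 1)) - w * aeval z (p m)‖ ≤
        θ m * (B * (‖aeval z (p m)‖ + ‖aeval z (p (m + 1))‖)) :=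
      h4.trans (mul_le_mul_of_nonneg_left (hK m) (hθ0 m))
    set u := ‖aeval z (p m)‖ with hu
    set v := ‖aeval z (p (m + 1))‖ with hv
    have hu0 : 0 ≤ u := norm_nonneg _
    have hv0 : 0 ≤ v := norm_nonneg _
    have h6 : θ m * B ≤ 1 / 2 := by
      rw [le_div_iff₀ (by positivity)] at h1
      linarith
    -- since `|w| > 1`, the approximate relation bounds `p m` by `p (m + 1)`
    have h7 : ‖w‖ * u ≤ jacA κ m * v + 1 / 2 * (u + v) := by
      have h8 : ‖w * aeval z (p m)‖ ≤ ‖(jacA κ m : ℂ) * aeval z (p (m + 1))‖ +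
          ‖(jacA κ m : ℂ) * aeval z (p (m + 1)) - w * aeval z (p m)‖ := by
        have := norm_sub_le ((jacA κ m : ℂ) * aeval z (p (m + 1)))
          ((jacA κ m : ℂ) * aeval z (p (m + 1)) - w * aeval z (p m))
        rwa [sub_sub_cancel] at this
      rw [norm_mul, norm_mul, Complex.norm_real, Real.norm_of_nonneg (jacA_pos hON m).le] at h8
      have h9 : θ m * (B * (u + v)) ≤ 1 / 2 * (u + v) := by
        rw [← mul_assoc]; gcongr
      linarith
    have huv : u ≤ 4 * v := by
      have h8 : 1 * u ≤ ‖w‖ * u := by gcongr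
      have h9 : jacA κ m * v ≤ 3 / 2 * v := by gcongr
      linarith
    have hvpos : 0 < v := by
      refine hv0.lt_of_ne fun hv' => ?_
      have hu' : u = 0 := by linarith
      have h8 := hK m
      rw [← hu, ← hv, hu', ← hv', add_zero, mul_zero, Real.sqrt_le_left le_rfl] at h8
      have h9 := Finset.single_le_sum (f := fun j => ‖aeval z (p j)‖ ^ 2)
        (fun j _ => sq_nonneg _) (Finset.mem_range.2 (Nat.succ_pos m))
      have h10 : 0 < ‖aeval z (p 0)‖ ^ 2 := by positivity
      linarith
    have hne : aeval z (p (m + 1)) ≠ 0 := norm_pos_iff.1 hvpos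
    have h8 : w * aeval z (p m) / aeval z (p (m + 1)) - jacA κ m =
        -(((jacA κ m : ℂ) * aeval z (p (m + 1)) - w * aeval z (p m)) / aeval z (p (m + 1))) := by
      field_simp
      ring
    rw [h8, norm_neg, norm_div, div_le_iff₀ hvpos]
    refine h5.trans ?_
    have h9 : θ m * (B * (u + v)) ≤ θ m * (B * (5 * v)) := by
      have := hθ0 m
      gcongr
      linarith
    linarith
  have hdiff : Tendsto (fun n => w * aeval z (p (n - 1)) / aeval z (p n) - jacA κ (n - 1)) l
      (𝓝 0) := by
    refine squeeze_zero_norm' hmain ?_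
    simpa using hθlim.const_mul (5 * B)
  have hac : Tendsto (fun n => (jacA κ (n - 1) : ℂ)) l (𝓝 1) := by
    have h := (Complex.continuous_ofReal.tendsto 1).comp halim
    rw [Complex.ofReal_one] at h
    exact h
  simpa using hdiff.add hac
end
end
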